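/- arXiv:1007.0912 — 3 statements merged into one kernel-verified Lean document; each statement's English description precedes it below -/
import Mathlib

section
/- For any real numbers ω₁, …, ω_l there exists a C^∞ function U = U(ρ, ζ) defined on a neighborhood of 0 in ℝ^{1+l} such that Φ(ρ,ζ)·∂U/∂ρ + Ψ₁(ρ,ζ)·∂U/∂ζ₁ + ⋯ + Ψ_l(ρ,ζ)·∂U/∂ζ_l = 0 identically near 0, with ∂U/∂ρ(0,0) = ω₁ and ∂U/∂ζ_i(0,0) = ω_i for i = 2, …, l. Moreover, for any such U the function (ξ, η, ζ) ↦ U(ξ^m η^n, ζ) is a first integral of the vector field V, i.e., its derivative along V vanishes identically in a neighborhood of 0 in ℝ^{2+l}. -/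
open Filter Topology

/-!
Along `V` the monomial `ρ` satisfies `ρ̇ = ρ (m (λ₁ + Φ₁) + n (λ₂ + Φ₂)) = ρ Φ` by resonance, so
`(ρ, ζ)` pushes `V` forward to `ρ • X` with `X = (Φ, Ψ)`, and every first integral `U` of `X` yields
one of `V`.

Since `Ψ₁(0) ≠ 0`, the field `X` is transverse to the hyperplane `ζ₁ = 0`, and a first integral is
obtained by transporting a linear function from this hyperplane along the trajectories of `X / Ψ₁`.
Smooth dependence of the flow on time and initial point comes from the implicit function theorem in
`C([0, 1], E)` applied to Picard's integral equation. That the transported function is constant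
along `X` is read off the linearised equation, which `(t - 1) • X (α t)` solves explicitly when `α`
is a trajectory.
-/

section FirstIntegrals

open Set
open scoped ContDiff unitInterval

universe u

section ImplicitFunction

variable {𝕜 : Type*} [RCLike 𝕜]
  {E₁ : Type*} [NormedAddCommGroup E₁] [NormedSpace 𝕜 E₁] [CompleteSpace E₁]
  {E₂ : Type*} [NormedAddCommGroup E₂] [NormedSpace 𝕜 E₂] [CompleteSpace E₂]
  {F : Type*} [NormedAddCommGroup F] [NormedSpace 𝕜 F] [CompleteSpace F]
  {f : E₁ × E₂ → F} {ψ : E₁ → E₂} {n : ℕ∞ω}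

theorem contDiffAt_and_fderiv_of_eventually_apply_eq (hn : n ≠ 0) {x : E₁}
    (hf : ContDiffAt 𝕜 n f (x, ψ x))
    (hinv : (fderiv 𝕜 f (x, ψ x) ∘L .inr 𝕜 E₁ E₂).IsInvertible) (hψ : ContinuousAt ψ x)
    (heq : ∀ᶠ y in 𝓝 x, f (y, ψ y) = f (x, ψ x)) :
    ContDiffAt 𝕜 n ψ x ∧ ∀ v w, fderiv 𝕜 f (x, ψ x) (v, w) = 0 → fderiv 𝕜 ψ x v = w := by
  have hψ_eq : ψ =ᶠ[𝓝 x] hf.implicitFunction hn hinv := by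
    have hgraph : Tendsto (fun y => (y, ψ y)) (𝓝 x) (𝓝 (x, ψ x)) := continuousAt_id.prodMk hψ
    filter_upwards [heq, hgraph.eventually
      (hf.eventually_apply_eq_iff_implicitFunction hn hinv)] with y hy hiff
    exact (hiff.1 hy).symm
  refine ⟨(hf.contDiffAt_implicitFunction hn hinv).congr_of_eventuallyEq hψ_eq,
    fun v w hvw => ?_⟩
  have hsplit : fderiv 𝕜 f (x, ψ x) (v, 0) = -fderiv 𝕜 f (x, ψ x) (0, w) := by
    rw [eq_neg_iff_add_eq_zero, ← map_add]
    simpa using hvw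
  rw [hψ_eq.fderiv_eq, (hf.hasStrictFDerivAt_implicitFunction hn hinv).hasFDerivAt.fderiv]
  have hinv_w := hinv.inverse_apply_self w
  simp only [ContinuousLinearMap.comp_apply, ContinuousLinearMap.inr_apply] at hinv_w
  simp [hsplit, hinv_w]

theorem exists_eventually_contDiffAt_implicitFunction (hn : n ≠ 0) {u : E₁ × E₂}
    (hf : ∀ᶠ y in 𝓝 u, ContDiffAt 𝕜 n f y) (hinv : (fderiv 𝕜 f u ∘L .inr 𝕜 E₁ E₂).IsInvertible) :
    ∃ ψ : E₁ → E₂, ∀ᶠ x in 𝓝 u.1, f (x, ψ x) = f u ∧ ContDiffAt 𝕜 n ψ x ∧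
      ∀ v w, fderiv 𝕜 f (x, ψ x) (v, w) = 0 → fderiv 𝕜 ψ x v = w := by
  have hfu : ContDiffAt 𝕜 n f u := hf.self_of_nhds
  set ψ := hfu.implicitFunction hn hinv
  have hψu : ψ u.1 = u.2 := hfu.implicitFunction_apply_self hn hinv
  have hψ : ContDiffAt 𝕜 1 ψ u.1 := (hfu.contDiffAt_implicitFunction hn hinv).of_le
    (ENat.one_le_iff_ne_zero_withTop.2 hn)
  have hgraph : Tendsto (fun x => (x, ψ x)) (𝓝 u.1) (𝓝 u) := by
    simpa only [ContinuousAt, id_eq, hψu] using continuousAt_id.prodMk hψ.continuousAt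
  have hinv_nhds : ∀ᶠ x in 𝓝 u.1, (fderiv 𝕜 f (x, ψ x) ∘L .inr 𝕜 E₁ E₂).IsInvertible := by
    obtain ⟨e, he⟩ := hinv
    have hcont : Tendsto (fun x => fderiv 𝕜 f (x, ψ x) ∘L .inr 𝕜 E₁ E₂) (𝓝 u.1)
        (𝓝 (e : E₂ →L[𝕜] F)) := by
      rw [he]
      exact ((continuous_id.clm_comp continuous_const).tendsto (fderiv 𝕜 f u)).comp
        ((hfu.continuousAt_fderiv hn).tendsto.comp hgraph)
    exact hcont e.nhds
  have heq := hfu.eventually_apply_implicitFunction hn hinv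
  refine ⟨ψ, ?_⟩
  filter_upwards [heq, heq.eventually_nhds, hinv_nhds, hψ.eventually (by simp),
    hgraph.eventually hf] with x hx hx_nhds hx_inv hx_diff hfx
  refine ⟨hx, contDiffAt_and_fderiv_of_eventually_apply_eq hn hfx hx_inv
    hx_diff.continuousAt ?_⟩
  rw [hx]
  exact hx_nhds

end ImplicitFunction

section PostComposition

variable {K : Type*} [TopologicalSpace K] [CompactSpace K]

/-- Pointwise application of a continuous family of operators to a continuous family of vectors.
Its first argument is bounded linear so that post-composition, whose derivative it expresses, can
be differentiated repeatedly. -/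
noncomputable def pointwiseApply (K E F : Type*) [TopologicalSpace K] [CompactSpace K]
    [NormedAddCommGroup E] [NormedSpace ℝ E] [NormedAddCommGroup F] [NormedSpace ℝ F] :
    C(K, E →L[ℝ] F) →L[ℝ] C(K, E) →L[ℝ] C(K, F) :=
  LinearMap.mkContinuous₂
    (LinearMap.mk₂ ℝ
      (fun (A : C(K, E →L[ℝ] F)) (h : C(K, E)) => (⟨fun t => A t (h t), by fun_prop⟩ : C(K, F)))
      (fun _ _ _ => by ext; simp) (fun _ _ _ => by ext; simp)
      (fun _ _ _ => by ext; simp) (fun _ _ _ => by ext; simp)) 1 fun A h => by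
    rw [one_mul]
    refine (ContinuousMap.norm_le _ (by positivity)).2 fun t =>
      ((A t).le_opNorm (h t)).trans ?_
    gcongr
    · exact A.norm_coe_le_norm t
    · exact h.norm_coe_le_norm t

theorem hasFDerivAt_postcomp {E F : Type*} [NormedAddCommGroup E] [NormedSpace ℝ E]
    [NormedAddCommGroup F] [NormedSpace ℝ F] {X : C(E, F)} {X' : C(E, E →L[ℝ] F)}
    (hX : ∀ x, HasFDerivAt X (X' x) x) (α : C(K, E)) :
    HasFDerivAt (fun β : C(K, E) => X.comp β) (pointwiseApply K E F (X'.comp α)) α := by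
  rw [hasFDerivAt_iff_isLittleO, Asymptotics.isLittleO_iff]
  intro ε hε
  obtain ⟨δ, hδ, hball⟩ := Metric.mem_nhds_iff.1
    (X'.continuous_postcomp.continuousAt.preimage_mem_nhds
      (Metric.ball_mem_nhds (X'.comp α) hε))
  filter_upwards [Metric.ball_mem_nhds α hδ] with β hβ
  refine (ContinuousMap.norm_le _ (by positivity)).2 fun t => ?_
  have hX'_segment : ∀ x ∈ segment ℝ (α t) (β t), ‖X' x - X' (α t)‖ ≤ ε := by
    rintro x ⟨a, b, ha, hb, hab, rfl⟩
    have hmem : a • α + b • β ∈ Metric.ball α δ :=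
      convex_ball α δ (Metric.mem_ball_self hδ) hβ ha hb hab
    rw [← dist_eq_norm]
    exact (ContinuousMap.dist_apply_le_dist (f := X'.comp (a • α + b • β)) (g := X'.comp α)
      t).trans (Metric.mem_ball.1 (hball hmem)).le
  calc ‖X (β t) - X (α t) - X' (α t) (β t - α t)‖
      ≤ ε * ‖β t - α t‖ := Convex.norm_image_sub_le_of_norm_hasFDerivWithin_le'
        (fun x _ => (hX x).hasFDerivWithinAt) hX'_segment (convex_segment _ _)
        (left_mem_segment ..) (right_mem_segment ..)
    _ ≤ ε * ‖β - α‖ := by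
      gcongr
      exact (β - α).norm_coe_le_norm t

variable {E : Type u} [NormedAddCommGroup E] [NormedSpace ℝ E]

theorem contDiff_nat_postcomp (n : ℕ) {F : Type u} [NormedAddCommGroup F] [NormedSpace ℝ F]
    (X : C(E, F)) (hX : ContDiff ℝ n X) : ContDiff ℝ n fun β : C(K, E) => X.comp β := by
  induction n generalizing F with
  | zero => exact contDiff_zero.2 X.continuous_postcomp
  | succ n ih =>
    obtain ⟨X', hX', hX_deriv⟩ := contDiff_succ_iff_hasFDerivAt.1 hX
    exact contDiff_succ_iff_hasFDerivAt.2 ⟨_,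
      (pointwiseApply K E F).contDiff.comp (ih ⟨X', hX'.continuous⟩ hX'),
      hasFDerivAt_postcomp hX_deriv⟩

theorem contDiff_postcomp {F : Type u} [NormedAddCommGroup F] [NormedSpace ℝ F] {n : ℕ∞}
    {X : C(E, F)} (hX : ContDiff ℝ n X) : ContDiff ℝ n fun β : C(K, E) => X.comp β :=
  contDiff_iff_forall_nat_le.2 fun m hm =>
    contDiff_nat_postcomp m X (hX.of_le (by exact_mod_cast hm))

end PostComposition

section Primitive

variable {E : Type*} [NormedAddCommGroup E] [NormedSpace ℝ E]

/-- The primitive vanishing at `0` of a continuous map on the unit interval, as a bounded operator.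
The integrand is extended to the real line by constants so that Mathlib's interval integral
applies. -/
noncomputable def primitive (E : Type*) [NormedAddCommGroup E] [NormedSpace ℝ E] :
    C(I, E) →L[ℝ] C(I, E) :=
  LinearMap.mkContinuous
    { toFun := fun α => ⟨fun t => ∫ τ in (0 : ℝ)..t, IccExtend zero_le_one α τ,
        (intervalIntegral.continuous_primitive
          (fun _ _ => (α.continuous.Icc_extend').intervalIntegrable _ _) 0).comp
          continuous_subtype_val⟩
      map_add' := fun α β => by
        ext t
        exact intervalIntegral.integral_add
          (α.continuous.Icc_extend'.intervalIntegrable _ _)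
          (β.continuous.Icc_extend'.intervalIntegrable _ _)
      map_smul' := fun c α => by
        ext t
        exact intervalIntegral.integral_smul _ _ } 1 fun α => by
    rw [one_mul]
    refine (ContinuousMap.norm_le _ (norm_nonneg _)).2 fun t => ?_
    refine (intervalIntegral.norm_integral_le_of_norm_le_const
      fun τ _ => α.norm_coe_le_norm _).trans ?_
    rw [sub_zero, abs_of_nonneg t.2.1]
    exact mul_le_of_le_one_right (norm_nonneg _) t.2.2

theorem primitive_apply (α : C(I, E)) (t : I) :
    primitive E α t = ∫ τ in (0 : ℝ)..t, IccExtend zero_le_one α τ :=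
  rfl

variable [CompleteSpace E]

theorem hasDerivAt_IccExtend_primitive (α : C(I, E)) {t : ℝ} (ht : t ∈ Ioo (0 : ℝ) 1) :
    HasDerivAt (IccExtend zero_le_one (primitive E α)) (IccExtend zero_le_one α t) t := by
  refine (α.continuous.Icc_extend'.integral_hasStrictDerivAt 0
    t).hasDerivAt.congr_of_eventuallyEq ?_
  filter_upwards [Ioo_mem_nhds ht.1 ht.2] with s hs
  rw [IccExtend_of_mem _ _ (Ioo_subset_Icc_self hs), primitive_apply]

theorem primitive_eq_sub_const {α γ : C(I, E)}
    (hγ : ∀ t ∈ Ioo (0 : ℝ) 1,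
      HasDerivAt (IccExtend zero_le_one γ) (IccExtend zero_le_one α t) t) :
    primitive E α = γ - .const I (γ 0) := by
  ext t
  rw [primitive_apply, intervalIntegral.integral_eq_sub_of_hasDerivAt_of_le t.2.1
    γ.continuous.Icc_extend'.continuousOn (fun s hs => hγ s ⟨hs.1, hs.2.trans_le t.2.2⟩)
    (α.continuous.Icc_extend'.intervalIntegrable _ _)]
  simp

end Primitive

section Transport

variable {E : Type u} [NormedAddCommGroup E] [NormedSpace ℝ E]

/-- The defect of a curve `α` in Picard's integral equation for the vector field `s • X` with
initial value `p`, as a function of `((s, p), α)`. Its zeros are the trajectories `t ↦ Fl_{st}(p)`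
of `X`, so that the time `s` becomes a parameter and all curves live on the unit interval. -/
noncomputable def picardResidual (X : C(E, E)) (q : (ℝ × E) × C(I, E)) : C(I, E) :=
  q.2 - .const I q.1.2 - q.1.1 • primitive E (X.comp q.2)

theorem picardResidual_eq_zero_iff {X : C(E, E)} {s : ℝ} {p : E} {α : C(I, E)} :
    picardResidual X ((s, p), α) = 0 ↔ α = .const I p + s • primitive E (X.comp α) := by
  rw [picardResidual, sub_eq_zero, sub_eq_iff_eq_add']

theorem apply_zero_of_picardResidual_eq_zero {X : C(E, E)} {s : ℝ} {p : E} {α : C(I, E)}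
    (hα : picardResidual X ((s, p), α) = 0) : α 0 = p := by
  rw [picardResidual_eq_zero_iff.1 hα]
  simp [primitive_apply]

theorem contDiff_picardResidual {n : ℕ∞} {X : C(E, E)} (hX : ContDiff ℝ n X) :
    ContDiff ℝ n (picardResidual X) :=
  (contDiff_snd.sub ((ContinuousLinearMap.const ℝ I).contDiff.comp
    (contDiff_snd.comp contDiff_fst))).sub ((contDiff_fst.comp contDiff_fst).smul
      ((primitive E).contDiff.comp ((contDiff_postcomp hX).comp contDiff_snd)))

theorem fderiv_picardResidual_apply {X : C(E, E)} {X' : C(E, E →L[ℝ] E)}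
    (hX : ∀ x, HasFDerivAt X (X' x) x) (q : (ℝ × E) × C(I, E)) (a : ℝ) (v : E) (δ : C(I, E)) :
    fderiv ℝ (picardResidual X) q ((a, v), δ) = δ - .const I v -
      (q.1.1 • primitive E (pointwiseApply I E E (X'.comp q.2) δ) +
        a • primitive E (X.comp q.2)) := by
  have h_time : HasFDerivAt (fun q : (ℝ × E) × C(I, E) => q.1.1) _ q :=
    (ContinuousLinearMap.fst ℝ ℝ E ∘L .fst ℝ (ℝ × E) C(I, E)).hasFDerivAt
  have h_init : HasFDerivAt (fun q : (ℝ × E) × C(I, E) => ContinuousMap.const I q.1.2) _ q :=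
    (ContinuousLinearMap.const ℝ I ∘L .snd ℝ ℝ E ∘L .fst ℝ (ℝ × E) C(I, E)).hasFDerivAt
  have h_integral : HasFDerivAt
      (fun q : (ℝ × E) × C(I, E) => primitive E (X.comp q.2)) _ q :=
    (primitive E).hasFDerivAt.comp q ((hasFDerivAt_postcomp hX q.2).comp q hasFDerivAt_snd)
  have h_residual : HasFDerivAt (picardResidual X) _ q :=
    (hasFDerivAt_snd.sub h_init).sub (h_time.smul h_integral)
  rw [h_residual.fderiv]
  rfl

variable [CompleteSpace E]

theorem hasDerivAt_IccExtend_of_picardResidual_eq_zero {X : C(E, E)} {s : ℝ} {p : E} {α : C(I, E)}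
    (hα : picardResidual X ((s, p), α) = 0) {t : ℝ} (ht : t ∈ Ioo (0 : ℝ) 1) :
    HasDerivAt (IccExtend zero_le_one α) (s • X (IccExtend zero_le_one α t)) t := by
  refine (((hasDerivAt_IccExtend_primitive (X.comp α) ht).const_smul s).const_add
    p).congr_of_eventuallyEq (.of_eq ?_)
  exact congrArg (IccExtend zero_le_one ∘ DFunLike.coe) (picardResidual_eq_zero_iff.1 hα)

/- Moving the initial point backwards along `X` while prolonging the time by the same amount
reparametrises the trajectory `α` with its endpoint fixed; to first order it moves by
`(t - 1) • X (α t)`. -/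
theorem fderiv_picardResidual_apply_transport_eq_zero {X : C(E, E)} (hX : ContDiff ℝ 1 X)
    {s : ℝ} {p : E} {α : C(I, E)} (hα : picardResidual X ((s, p), α) = 0) :
    fderiv ℝ (picardResidual X) ((s, p), α)
      ((1, -X p), ⟨fun t => ((t : ℝ) - 1) • X (α t), by fun_prop⟩) = 0 := by
  let X' : C(E, E →L[ℝ] E) := ⟨fderiv ℝ X, hX.continuous_fderiv one_ne_zero⟩
  have hX' (x : E) : HasFDerivAt X (X' x) x :=
    (hX.differentiable one_ne_zero x).hasFDerivAt
  set δ : C(I, E) := ⟨fun t => ((t : ℝ) - 1) • X (α t), by fun_prop⟩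
  have hδ : primitive E (X.comp α + s • pointwiseApply I E E (X'.comp α) δ) =
      δ - .const I (δ 0) := by
    refine primitive_eq_sub_const fun t ht => ?_
    have hX_deriv := (hX' _).comp_hasDerivAt t
      (hasDerivAt_IccExtend_of_picardResidual_eq_zero hα ht)
    have hδ_deriv := ((hasDerivAt_id t).sub_const 1).smul hX_deriv
    refine (hδ_deriv.congr_of_eventuallyEq ?_).congr_deriv ?_
    · filter_upwards [Ioo_mem_nhds ht.1 ht.2] with τ hτ
      rw [IccExtend_of_mem _ _ (Ioo_subset_Icc_self hτ)]
      simp [δ, IccExtend_of_mem _ _ (Ioo_subset_Icc_self hτ)]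
    · rw [IccExtend_of_mem _ _ (Ioo_subset_Icc_self ht),
        IccExtend_of_mem _ _ (Ioo_subset_Icc_self ht)]
      simp only [id_eq, map_smul, one_smul, Function.comp_apply,
        IccExtend_of_mem _ _ (Ioo_subset_Icc_self ht)]
      rw [add_comm, smul_comm (t - 1) s]
      simp [δ, pointwiseApply]
  have hδ0 : δ 0 = -X p := by simp [δ, apply_zero_of_picardResidual_eq_zero hα]
  rw [map_add, map_smul, hδ0] at hδ
  rw [fderiv_picardResidual_apply hX', one_smul, add_comm, hδ, sub_self]

theorem exists_contDiffAt_transport {n : ℕ∞} (hn : n ≠ 0) {X : E → E} (hX : ContDiff ℝ n X)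
    (x₀ : E) : ∃ φ : ℝ × E → E, (∀ᶠ p in 𝓝 x₀, φ (0, p) = p) ∧
      ∀ᶠ q in 𝓝 (0, x₀), ContDiffAt ℝ n φ q ∧ fderiv ℝ φ q (1, -X q.2) = 0 := by
  have hn' : (n : ℕ∞ω) ≠ 0 := by exact_mod_cast hn
  have hX₁ : ContDiff ℝ 1 X := hX.of_le (ENat.one_le_iff_ne_zero_withTop.2 hn')
  lift X to C(E, E) using hX.continuous
  set u : (ℝ × E) × C(I, E) := ((0, x₀), .const I x₀)
  have hu : picardResidual X u = 0 := by simp [picardResidual, u]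
  have hinv : (fderiv ℝ (picardResidual X) u ∘L .inr ℝ (ℝ × E) C(I, E)).IsInvertible := by
    refine ⟨.refl ℝ _, ContinuousLinearMap.ext fun δ => ?_⟩
    rw [ContinuousLinearMap.comp_apply, ContinuousLinearMap.inr_apply, ← Prod.mk_zero_zero,
      fderiv_picardResidual_apply (X' := ⟨fderiv ℝ X, hX₁.continuous_fderiv one_ne_zero⟩)
        fun x => (hX₁.differentiable one_ne_zero x).hasFDerivAt]
    ext t
    simp [u]
  obtain ⟨ψ, hψ⟩ := exists_eventually_contDiffAt_implicitFunction hn'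
    (.of_forall fun _ => (contDiff_picardResidual hX).contDiffAt) hinv
  rw [hu] at hψ
  let endpoint : C(I, E) →L[ℝ] E := ContinuousMap.evalCLM ℝ 1
  refine ⟨fun q => endpoint (ψ q), ?_, hψ.mono fun q ⟨hq, hψ_smooth, hψ_fderiv⟩ => ⟨?_, ?_⟩⟩
  · have hslice : Tendsto (fun p : E => ((0 : ℝ), p)) (𝓝 x₀) (𝓝 (0, x₀)) :=
      (Continuous.prodMk_right 0).tendsto x₀
    filter_upwards [hslice.eventually hψ] with p ⟨hp, _⟩
    have hψp : ψ (0, p) = ContinuousMap.const I p := by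
      simpa using picardResidual_eq_zero_iff.1 hp
    simp [endpoint, hψp]
  · exact endpoint.contDiff.contDiffAt.comp q hψ_smooth
  · have hφ := endpoint.hasFDerivAt.comp q (hψ_smooth.differentiableAt hn').hasFDerivAt
    refine (DFunLike.congr_fun hφ.fderiv _).trans ?_
    rw [ContinuousLinearMap.comp_apply,
      hψ_fderiv _ _ (fderiv_picardResidual_apply_transport_eq_zero hX₁ hq)]
    simp [endpoint]

theorem exists_firstIntegral_of_contDiff {n : ℕ∞} (hn : n ≠ 0) {X : E → E}
    (hX : ContDiff ℝ n X) (ℓ : E →L[ℝ] ℝ) (x₀ : E) :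
    ∃ g : E → E, (∀ᶠ p in 𝓝 x₀, ContDiffAt ℝ n g p ∧ (ℓ (X p) = 1 → fderiv ℝ g p (X p) = 0)) ∧
      ∀ v, ℓ v = 0 → fderiv ℝ g x₀ v = v := by
  have hn' : (n : ℕ∞ω) ≠ 0 := by exact_mod_cast hn
  obtain ⟨φ, hφ_zero, hφ⟩ := exists_contDiffAt_transport hn hX x₀
  -- When `ℓ ∘ X = 1`, the flow for time `ℓ (x₀ - p)` carries `p` to the hyperplane `ℓ = ℓ x₀`.
  let h : E → ℝ × E := fun p => (ℓ (x₀ - p), p)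
  have hh (p : E) : HasFDerivAt h ((-ℓ).prod (.id ℝ E)) p := by
    refine HasFDerivAt.prodMk ?_ (hasFDerivAt_id p)
    simpa [Function.comp_def] using ℓ.hasFDerivAt.comp p ((hasFDerivAt_id p).const_sub x₀)
  have hh_smooth : ContDiff ℝ n h := by fun_prop
  have hhx₀ : h x₀ = (0, x₀) := by simp [h]
  have hg (p : E) (hp : ContDiffAt ℝ n φ (h p)) (v : E) :
      fderiv ℝ (φ ∘ h) p v = fderiv ℝ φ (h p) (-ℓ v, v) :=
    DFunLike.congr_fun ((hp.differentiableAt hn').hasFDerivAt.comp p (hh p)).fderiv v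
  refine ⟨φ ∘ h, ?_, fun v hv => ?_⟩
  · filter_upwards [(hhx₀ ▸ hh_smooth.continuous.tendsto x₀).eventually hφ] with p ⟨hp, hp_fderiv⟩
    refine ⟨hp.comp p hh_smooth.contDiffAt, fun hℓ => ?_⟩
    have hneg : ((-ℓ (X p), X p) : ℝ × E) = -(1, -X (h p).2) := by simp [h, hℓ]
    rw [hg p hp, hneg, map_neg, hp_fderiv, neg_zero]
  · have hφx₀ : ContDiffAt ℝ n φ (0, x₀) := hφ.self_of_nhds.1
    have hslice := (hφx₀.differentiableAt hn').hasFDerivAt.comp x₀ (hasFDerivAt_prodMk_right 0 x₀)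
    have hid := hslice.congr_of_eventuallyEq (f₁ := id) (hφ_zero.mono fun p hp => hp.symm)
    rw [hg x₀ (hhx₀ ▸ hφx₀), hhx₀, hv, neg_zero]
    exact DFunLike.congr_fun (hid.unique (hasFDerivAt_id x₀)) v

end Transport

section LocalFields

theorem exists_contDiff_eventuallyEq {E F : Type*} [NormedAddCommGroup E] [NormedSpace ℝ E]
    [HasContDiffBump E] [NormedAddCommGroup F] [NormedSpace ℝ F] {n : ℕ∞} {X : E → F} {x : E}
    (hX : ∀ᶠ y in 𝓝 x, ContDiffAt ℝ n X y) : ∃ Y : E → F, ContDiff ℝ n Y ∧ Y =ᶠ[𝓝 x] X := by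
  obtain ⟨r, hr, hball⟩ := Metric.nhds_basis_closedBall.mem_iff.1 hX
  let b : ContDiffBump x := ⟨r / 2, r, by positivity, by linarith⟩
  refine ⟨fun y => b y • X y, contDiff_iff_contDiffAt.2 fun y => ?_, ?_⟩
  · by_cases hy : y ∈ tsupport b
    · exact b.contDiffAt.smul (hball (b.tsupport_eq ▸ hy))
    · refine (contDiffAt_const (c := (0 : F))).congr_of_eventuallyEq ?_
      filter_upwards [(isClosed_tsupport b).isOpen_compl.mem_nhds hy] with z hz
      rw [image_eq_zero_of_notMem_tsupport hz, zero_smul]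
  · filter_upwards [b.eventuallyEq_one] with y hy
    rw [hy, Pi.one_apply, one_smul]

theorem exists_firstIntegral {E F : Type*} [NormedAddCommGroup E] [NormedSpace ℝ E]
    [CompleteSpace E] [HasContDiffBump E] [NormedAddCommGroup F] [NormedSpace ℝ F] {n : ℕ∞}
    (hn : n ≠ 0) {X : E → E} {x₀ : E} (hX : ∀ᶠ p in 𝓝 x₀, ContDiffAt ℝ n X p) (ℓ : E →L[ℝ] ℝ)
    (hℓ : ℓ (X x₀) ≠ 0) (L : E →L[ℝ] F) :
    ∃ U : E → F, (∀ᶠ p in 𝓝 x₀, ContDiffAt ℝ n U p ∧ fderiv ℝ U p (X p) = 0) ∧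
      ∀ v, ℓ v = 0 → fderiv ℝ U x₀ v = L v := by
  have hℓX : ∀ᶠ p in 𝓝 x₀, ℓ (X p) ≠ 0 :=
    (ℓ.continuous.continuousAt.comp hX.self_of_nhds.continuousAt).eventually_ne hℓ
  have hnormalised : ∀ᶠ p in 𝓝 x₀, ContDiffAt ℝ n (fun p => (ℓ (X p))⁻¹ • X p) p := by
    filter_upwards [hX, hℓX] with p hp hne
    exact ((ℓ.contDiff.contDiffAt.comp p hp).inv hne).smul hp
  obtain ⟨Y, hY, hYX⟩ := exists_contDiff_eventuallyEq hnormalised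
  obtain ⟨g, hg, hg_ker⟩ := exists_firstIntegral_of_contDiff hn hY ℓ x₀
  have hLg {p : E} (hp : ContDiffAt ℝ n g p) (v : E) :
      fderiv ℝ (L ∘ g) p v = L (fderiv ℝ g p v) :=
    DFunLike.congr_fun (L.hasFDerivAt.comp p
      (hp.differentiableAt (by exact_mod_cast hn)).hasFDerivAt).fderiv v
  refine ⟨L ∘ g, ?_, fun v hv => by rw [hLg hg.self_of_nhds.1, hg_ker v hv]⟩
  filter_upwards [hg, hYX, hℓX] with p ⟨hp, hgp⟩ hYp hne
  have hℓY : ℓ (Y p) = 1 := by simp [hYp, hne]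
  have hXY : X p = ℓ (X p) • Y p := by rw [hYp, smul_inv_smul₀ hne]
  refine ⟨L.contDiff.contDiffAt.comp p hp, ?_⟩
  rw [hLg hp, hXY, map_smul, hgp hℓY, smul_zero, map_zero]

end LocalFields

end FirstIntegrals

section NormalForm

theorem fderiv_comp_monomial_apply {Z F : Type*} [NormedAddCommGroup Z] [NormedSpace ℝ Z]
    [NormedAddCommGroup F] [NormedSpace ℝ F] (m n : ℕ) {U : ℝ × Z → F} {x : ℝ × ℝ × Z}
    (hU : DifferentiableAt ℝ U (x.1 ^ m * x.2.1 ^ n, x.2.2)) (a b : ℝ) (w : Z) :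
    fderiv ℝ (fun y : ℝ × ℝ × Z => U (y.1 ^ m * y.2.1 ^ n, y.2.2)) x
        (x.1 * a, x.2.1 * b, (x.1 ^ m * x.2.1 ^ n) • w) =
      (x.1 ^ m * x.2.1 ^ n) •
        fderiv ℝ U (x.1 ^ m * x.2.1 ^ n, x.2.2) (m * a + n * b, w) := by
  have h_euler (k : ℕ) (t c : ℝ) : k * t ^ (k - 1) * (t * c) = t ^ k * (k * c) := by
    cases k with
    | zero => simp
    | succ k => rw [Nat.add_sub_cancel, pow_succ]; ring
  let ξ := ContinuousLinearMap.fst ℝ ℝ (ℝ × Z)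
  let η := ContinuousLinearMap.fst ℝ ℝ Z ∘L .snd ℝ ℝ (ℝ × Z)
  let ζ := ContinuousLinearMap.snd ℝ ℝ Z ∘L .snd ℝ ℝ (ℝ × Z)
  have h_inner := (((ξ.hasFDerivAt (x := x)).pow m).mul (η.hasFDerivAt.pow n)).prodMk
    ζ.hasFDerivAt
  have h_comp := hU.hasFDerivAt.comp x h_inner
  refine (DFunLike.congr_fun h_comp.fderiv _).trans ?_
  rw [ContinuousLinearMap.comp_apply, ← map_smul]
  congr 1
  refine Prod.ext ?_ rfl
  simp only [ξ, η, h_euler, ContinuousLinearMap.prod_apply, ContinuousLinearMap.comp_apply,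
    ContinuousLinearMap.coe_fst', ContinuousLinearMap.coe_snd', add_apply, smul_apply,
    Prod.smul_mk, smul_eq_mul, nsmul_eq_mul]
  ring

theorem fderiv_comp_monomial_resonant_eq_zero {Z F : Type*} [NormedAddCommGroup Z]
    [NormedSpace ℝ Z] [NormedAddCommGroup F] [NormedSpace ℝ F] {m n : ℕ} {lam₁ lam₂ : ℝ}
    (hresonance : (m : ℝ) * lam₁ + (n : ℝ) * lam₂ = 0) {U : ℝ × Z → F} {x : ℝ × ℝ × Z}
    (hU : DifferentiableAt ℝ U (x.1 ^ m * x.2.1 ^ n, x.2.2)) {a b : ℝ} {w : Z}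
    (h : fderiv ℝ U (x.1 ^ m * x.2.1 ^ n, x.2.2) (m * a + n * b, w) = 0) :
    fderiv ℝ (fun y : ℝ × ℝ × Z => U (y.1 ^ m * y.2.1 ^ n, y.2.2)) x
      (x.1 * (lam₁ + a), x.2.1 * (lam₂ + b), (x.1 ^ m * x.2.1 ^ n) • w) = 0 := by
  have h_cancel : m * (lam₁ + a) + n * (lam₂ + b) = m * a + n * b := by
    linear_combination hresonance
  rw [fderiv_comp_monomial_apply m n hU, h_cancel, h, smul_zero]

variable {ι : Type*} [Fintype ι] [DecidableEq ι]

theorem map_prod_pi_eq_sum (f : ℝ × (ι → ℝ) →L[ℝ] ℝ) (a : ℝ) (c : ι → ℝ) :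
    f (a, c) = a * f (1, 0) + ∑ i, c i * f (0, Pi.single i 1) := by
  have h_coords : ((a, c) : ℝ × (ι → ℝ)) =
      a • ((1, 0) : ℝ × (ι → ℝ)) + ∑ i, c i • ((0, Pi.single i 1) : ℝ × (ι → ℝ)) := by
    refine Prod.ext ?_ (funext fun j => ?_)
    · simp [Prod.fst_sum]
    · simp [Prod.snd_sum, Finset.sum_apply, Pi.single_apply]
  rw [h_coords, map_add, map_sum, map_smul]
  simp only [map_smul, smul_eq_mul]

theorem exists_firstIntegral_prod_pi {k : ℕ∞} (hk : k ≠ 0) {N₀ : Set (ℝ × (ι → ℝ))}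
    (hN₀ : IsOpen N₀) {p₀ : ℝ × (ι → ℝ)} (hp₀ : p₀ ∈ N₀) {Φ : ℝ × (ι → ℝ) → ℝ}
    {Ψ : ι → ℝ × (ι → ℝ) → ℝ} (hΦ : ContDiffOn ℝ k Φ N₀) (hΨ : ∀ i, ContDiffOn ℝ k (Ψ i) N₀)
    {i₀ : ι} (hΨ₀ : Ψ i₀ p₀ ≠ 0) (c : ℝ) (ω : ι → ℝ) :
    ∃ (N₁ : Set (ℝ × (ι → ℝ))) (U : ℝ × (ι → ℝ) → ℝ),
      IsOpen N₁ ∧ p₀ ∈ N₁ ∧ N₁ ⊆ N₀ ∧ ContDiffOn ℝ k U N₁ ∧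
      (∀ p ∈ N₁, Φ p * fderiv ℝ U p (1, 0) +
        ∑ i, Ψ i p * fderiv ℝ U p (0, Pi.single i 1) = 0) ∧
      fderiv ℝ U p₀ (1, 0) = c ∧ ∀ i ≠ i₀, fderiv ℝ U p₀ (0, Pi.single i 1) = ω i := by
  let ζ (i : ι) : ℝ × (ι → ℝ) →L[ℝ] ℝ := .proj i ∘L .snd ℝ ℝ (ι → ℝ)
  let L : ℝ × (ι → ℝ) →L[ℝ] ℝ := c • .fst ℝ ℝ (ι → ℝ) + ∑ i, ω i • ζ i
  have hX : ∀ᶠ p in 𝓝 p₀, ContDiffAt ℝ k (fun p => (Φ p, fun i => Ψ i p)) p := by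
    filter_upwards [hN₀.mem_nhds hp₀] with p hp
    exact (hΦ.prodMk (contDiffOn_pi.2 hΨ)).contDiffAt (hN₀.mem_nhds hp)
  obtain ⟨U, hU, hU_ker⟩ := exists_firstIntegral hk hX (ζ i₀) hΨ₀ L
  obtain ⟨N₁, hN₁, hN₁_open, hp₀N₁⟩ := mem_nhds_iff.1 (hU.and (hN₀.mem_nhds hp₀))
  refine ⟨N₁, U, hN₁_open, hp₀N₁, fun p hp => (hN₁ hp).2,
    fun p hp => (hN₁ hp).1.1.contDiffWithinAt, fun p hp => ?_, ?_, fun i hi => ?_⟩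
  · rw [← map_prod_pi_eq_sum]
    exact (hN₁ hp).1.2
  · rw [hU_ker _ (by simp [ζ])]
    simp [L, ζ]
  · rw [hU_ker _ (by simp [ζ, hi.symm])]
    simp [L, ζ, Pi.single_apply]

end NormalForm

theorem stmt11_general {ι : Type*} [Fintype ι] [DecidableEq ι] (i₀ : ι) (n m : ℕ)
    (hmn : m + n ≠ 0) (lam₁ lam₂ : ℝ) (hresonance : (m : ℝ) * lam₁ + (n : ℝ) * lam₂ = 0)
    {k : ℕ∞} (hk : k ≠ 0) (N₀ : Set (ℝ × (ι → ℝ))) (hN₀ : IsOpen N₀) (hN₀0 : 0 ∈ N₀)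
    (Φ₁ Φ₂ : ℝ × (ι → ℝ) → ℝ) (Ψ : ι → ℝ × (ι → ℝ) → ℝ) (hΦ₁ : ContDiffOn ℝ k Φ₁ N₀)
    (hΦ₂ : ContDiffOn ℝ k Φ₂ N₀) (hΨ : ∀ i, ContDiffOn ℝ k (Ψ i) N₀) (hΨ₀ : Ψ i₀ 0 ≠ 0)
    (Φ : ℝ × (ι → ℝ) → ℝ) (hΦ : Φ = fun p => (m : ℝ) * Φ₁ p + (n : ℝ) * Φ₂ p)
    (ρ : ℝ × ℝ × (ι → ℝ) → ℝ) (hρ : ρ = fun x => x.1 ^ m * x.2.1 ^ n)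
    (V : ℝ × ℝ × (ι → ℝ) → ℝ × ℝ × (ι → ℝ))
    (hV : V = fun x => (x.1 * (lam₁ + Φ₁ (ρ x, x.2.2)), x.2.1 * (lam₂ + Φ₂ (ρ x, x.2.2)),
      fun i => ρ x * Ψ i (ρ x, x.2.2)))
    (c : ℝ) (ω : ι → ℝ) :
    (∃ (N₁ : Set (ℝ × (ι → ℝ))) (U : ℝ × (ι → ℝ) → ℝ),
      IsOpen N₁ ∧ 0 ∈ N₁ ∧ N₁ ⊆ N₀ ∧ ContDiffOn ℝ k U N₁ ∧
      (∀ p ∈ N₁, Φ p * fderiv ℝ U p (1, 0) +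
        ∑ i, Ψ i p * fderiv ℝ U p (0, Pi.single i 1) = 0) ∧
      fderiv ℝ U 0 (1, 0) = c ∧ ∀ i ≠ i₀, fderiv ℝ U 0 (0, Pi.single i 1) = ω i) ∧
    ∀ (N₁ : Set (ℝ × (ι → ℝ))) (U : ℝ × (ι → ℝ) → ℝ),
      IsOpen N₁ → 0 ∈ N₁ → DifferentiableOn ℝ U N₁ →
      (∀ p ∈ N₁, Φ p * fderiv ℝ U p (1, 0) +
        ∑ i, Ψ i p * fderiv ℝ U p (0, Pi.single i 1) = 0) →
      ∃ ε > 0, ∀ x, ‖x‖ < ε → fderiv ℝ (fun y => U (ρ y, y.2.2)) x (V x) = 0 := by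
  subst hΦ hρ hV
  refine ⟨exists_firstIntegral_prod_pi hk hN₀ hN₀0
    ((contDiffOn_const.mul hΦ₁).add (contDiffOn_const.mul hΦ₂)) hΨ hΨ₀ c ω,
    fun N₁ U hN₁ hN₁0 hU hPDE => ?_⟩
  have h_mem : ∀ᶠ x : ℝ × ℝ × (ι → ℝ) in 𝓝 0, (x.1 ^ m * x.2.1 ^ n, x.2.2) ∈ N₁ := by
    have h_cont : Continuous fun x : ℝ × ℝ × (ι → ℝ) => (x.1 ^ m * x.2.1 ^ n, x.2.2) := by
      fun_prop
    have h_zero : (0 : ℝ) ^ m * 0 ^ n = 0 := by rw [← pow_add, zero_pow hmn]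
    exact (h_cont.tendsto' 0 0 (by simp [h_zero])).eventually_mem (hN₁.mem_nhds hN₁0)
  obtain ⟨ε, hε, h_ball⟩ := Metric.eventually_nhds_iff.1 h_mem
  refine ⟨ε, hε, fun x hx => ?_⟩
  have hx_mem := h_ball ((dist_zero_right x).trans_lt hx)
  refine fderiv_comp_monomial_resonant_eq_zero hresonance
    (hU.differentiableAt (hN₁.mem_nhds hx_mem)) ?_
  rw [map_prod_pi_eq_sum]
  exact hPDE _ hx_mem

/-- In the resonant normal form `ξ̇ = ξ(λ₁ + Φ₁(ρ,ζ)), η̇ = η(λ₂ + Φ₂(ρ,ζ)),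
ζ̇ᵢ = ρ·Ψᵢ(ρ,ζ)` with `ρ = ξ^m η^n`, `m·λ₁ + n·λ₂ = 0` and `Ψ₁(0,0) ≠ 0`: for any
`ω₁, …, ω_l` there is a smooth solution `U(ρ,ζ)` of
`Φ·U_ρ + Ψ₁·U_{ζ₁} + ⋯ + Ψ_l·U_{ζ_l} = 0` near `0` with `U_ρ(0,0) = ω₁` and
`U_{ζᵢ}(0,0) = ωᵢ` for `i = 2, …, l`; moreover any such `U` yields a first integral
`(ξ,η,ζ) ↦ U(ξ^m η^n, ζ)` of `V` near `0`. -/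
theorem stmt11 (l : ℕ) (hl : 0 < l) (n m : ℕ) (hn : 0 < n) (hm : 0 < m)
    (hcop : Nat.Coprime m n)
    (lam₁ lam₂ : ℝ) (hlam₁ : lam₁ ≠ 0) (hresonance : (m : ℝ) * lam₁ + (n : ℝ) * lam₂ = 0)
    (N₀ : Set (ℝ × (Fin l → ℝ))) (hN₀ : IsOpen N₀) (hN₀0 : (0 : ℝ × (Fin l → ℝ)) ∈ N₀)
    (Φ₁ Φ₂ : (ℝ × (Fin l → ℝ)) → ℝ) (Ψ : Fin l → (ℝ × (Fin l → ℝ)) → ℝ)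
    (hΦ₁ : ContDiffOn ℝ (⊤ : ℕ∞) Φ₁ N₀) (hΦ₂ : ContDiffOn ℝ (⊤ : ℕ∞) Φ₂ N₀)
    (hΨ : ∀ i, ContDiffOn ℝ (⊤ : ℕ∞) (Ψ i) N₀)
    (hΦ₁0 : Φ₁ 0 = 0) (hΦ₂0 : Φ₂ 0 = 0)
    (hΨ₁ : Ψ ⟨0, hl⟩ 0 ≠ 0)
    (Φ : (ℝ × (Fin l → ℝ)) → ℝ) (hΦ : Φ = fun p => (m : ℝ) * Φ₁ p + (n : ℝ) * Φ₂ p)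
    (ρ : (ℝ × ℝ × (Fin l → ℝ)) → ℝ) (hρ : ρ = fun x => x.1 ^ m * x.2.1 ^ n)
    (V : (ℝ × ℝ × (Fin l → ℝ)) → (ℝ × ℝ × (Fin l → ℝ)))
    (hV : V = fun x => (x.1 * (lam₁ + Φ₁ (ρ x, x.2.2)), x.2.1 * (lam₂ + Φ₂ (ρ x, x.2.2)),
      fun i => ρ x * Ψ i (ρ x, x.2.2)))
    (ω : Fin l → ℝ) :
    (∃ (N₁ : Set (ℝ × (Fin l → ℝ))) (U : (ℝ × (Fin l → ℝ)) → ℝ),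
      IsOpen N₁ ∧ (0 : ℝ × (Fin l → ℝ)) ∈ N₁ ∧ N₁ ⊆ N₀ ∧
      ContDiffOn ℝ (⊤ : ℕ∞) U N₁ ∧
      (∀ p ∈ N₁, Φ p * fderiv ℝ U p ((1 : ℝ), (0 : Fin l → ℝ)) +
        ∑ i : Fin l, Ψ i p * fderiv ℝ U p ((0 : ℝ), Pi.single i (1 : ℝ)) = 0) ∧
      fderiv ℝ U 0 ((1 : ℝ), (0 : Fin l → ℝ)) = ω ⟨0, hl⟩ ∧
      (∀ i : Fin l, i ≠ ⟨0, hl⟩ →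
        fderiv ℝ U 0 ((0 : ℝ), Pi.single i (1 : ℝ)) = ω i)) ∧
    (∀ (N₁ : Set (ℝ × (Fin l → ℝ))) (U : (ℝ × (Fin l → ℝ)) → ℝ),
      IsOpen N₁ → (0 : ℝ × (Fin l → ℝ)) ∈ N₁ → N₁ ⊆ N₀ →
      ContDiffOn ℝ (⊤ : ℕ∞) U N₁ →
      (∀ p ∈ N₁, Φ p * fderiv ℝ U p ((1 : ℝ), (0 : Fin l → ℝ)) +
        ∑ i : Fin l, Ψ i p * fderiv ℝ U p ((0 : ℝ), Pi.single i (1 : ℝ)) = 0) →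
      fderiv ℝ U 0 ((1 : ℝ), (0 : Fin l → ℝ)) = ω ⟨0, hl⟩ →
      (∀ i : Fin l, i ≠ ⟨0, hl⟩ →
        fderiv ℝ U 0 ((0 : ℝ), Pi.single i (1 : ℝ)) = ω i) →
      ∃ ε > 0, ∀ x : ℝ × ℝ × (Fin l → ℝ), ‖x‖ < ε →
        fderiv ℝ (fun y => U (ρ y, y.2.2)) x (V x) = 0) := by
  obtain ⟨h_exists, h_integral⟩ := stmt11_general ⟨0, hl⟩ n m (by omega) lam₁ lam₂ hresonance
    (k := ⊤) (by simp) N₀ hN₀ hN₀0 Φ₁ Φ₂ Ψ hΦ₁ hΦ₂ hΨ hΨ₁ Φ hΦ ρ hρ V hV (ω ⟨0, hl⟩) ω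
  exact ⟨h_exists, fun N₁ U hN₁ hN₁0 _ hU hPDE _ _ =>
    h_integral N₁ U hN₁ hN₁0 (hU.differentiableOn (by simp)) hPDE⟩
end

section
/- Assume Conditions (A) and (B) hold, r ∉ {0, 1}, the point 0 lies in Γ, the singular set W^c = {ξ = η = 0} of V is contained in Γ in a neighborhood of 0, and the complex eigenvalues of the Jacobian of V at 0 are λ₁, λ₂ together with 0 of multiplicity l, where λ₁ is real and nonzero. Then λ₂ is also real and nonzero, λ₁ + λ₂ ≠ 0, and either λ₂ = (r − 1)·λ₁ or λ₁ = (r − 1)·λ₂; equivalently, the spectrum of the linearization of V at 0 is σ·(1, r − 1, 0, …, 0) for some real σ ≠ 0. -/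
open Filter Topology

/-- Partial derivative of `g : ℝⁿ → ℝ` in the `i`-th coordinate direction. -/
noncomputable def pderiv' {n : ℕ} (g : (Fin n → ℝ) → ℝ) (i : Fin n) (x : Fin n → ℝ) : ℝ :=
  fderiv ℝ g x (Pi.single i 1)

/-- Divergence of a vector field on ℝⁿ. -/
noncomputable def diverg {n : ℕ} (V : (Fin n → ℝ) → (Fin n → ℝ)) (x : Fin n → ℝ) : ℝ :=
  ∑ i, pderiv' (fun y => V y i) i x

/-- Gradient of `g : ℝⁿ → ℝ`. -/
noncomputable def grad' {n : ℕ} (g : (Fin n → ℝ) → ℝ) (x : Fin n → ℝ) : Fin n → ℝ :=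
  fun i => pderiv' g i x

/-- The Euclidean inner product on ℝⁿ. -/
noncomputable def dotp {n : ℕ} (u w : Fin n → ℝ) : ℝ := ∑ i, u i * w i

/-- Condition (A): for every `x* ∈ Γ`, `|f x|^(r+1) · div W x → 0` as `x → x*`
with `x ∈ Ω \ Γ`. -/
def CondA {n : ℕ} (Ω Γ : Set (Fin n → ℝ)) (f : (Fin n → ℝ) → ℝ) (r : ℝ)
    (W : (Fin n → ℝ) → (Fin n → ℝ)) : Prop :=
  ∀ xs ∈ Γ, Filter.Tendsto (fun x => |f x| ^ (r + 1) * diverg W x)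
    (nhdsWithin xs (Ω \ Γ)) (nhds 0)

/-- Condition (B): for every `x* ∈ Γ` with `V x* = 0`, one has
`|f x|^r · div W x → 0` and `|f x|^(r+1) · ∂(div W)/∂x_i x → 0` as `x → x*`
with `x ∈ Ω \ Γ`, for each `i`. -/
def CondB {n : ℕ} (Ω Γ : Set (Fin n → ℝ)) (f : (Fin n → ℝ) → ℝ) (r : ℝ)
    (V W : (Fin n → ℝ) → (Fin n → ℝ)) : Prop :=
  ∀ xs ∈ Γ, V xs = 0 →
    Filter.Tendsto (fun x => |f x| ^ r * diverg W x) (nhdsWithin xs (Ω \ Γ)) (nhds 0) ∧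
    ∀ i : Fin n, Filter.Tendsto (fun x => |f x| ^ (r + 1) * pderiv' (diverg W) i x)
      (nhdsWithin xs (Ω \ Γ)) (nhds 0)

/-!
Away from `f = 0` one has `|f|^r div (|f|^(-r) V) = div V - r df(V) / f`. At a zero `p` of `V` on
the hypersurface `f = 0`, let this tend to zero along the lines through `p` transversal to the
hypersurface: the limit says that `r df ∘ dV = (div V) df` at `p`, first on the vectors with
`df ≠ 0`, then everywhere since these span. So `df` is a left eigenvector of `dV`, with
eigenvalue `div V / r`. Both `df` and `dV` vanish along the space `S` tangent to the zeros of `V`,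
so this eigenvalue is already one of the induced map on the quotient by `S`, whose eigenvalues are
`λ₁` and `λ₂`. As `div V = tr dV = λ₁ + λ₂`, this reads `λ₁ + λ₂ = r λ₁` or `λ₁ + λ₂ = r λ₂`.
-/

section LinearAlgebra

open Polynomial

theorem linearMap_ext_of_apply_ne_zero {R M N P : Type*} [Ring R] [AddCommGroup M]
    [AddCommGroup N] [AddCommGroup P] [Module R M] [Module R N] [Module R P]
    {φ : M →ₗ[R] P} {f g : M →ₗ[R] N} (hφ : φ ≠ 0) (h : ∀ x, φ x ≠ 0 → f x = g x) : f = g := by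
  obtain ⟨u, hu⟩ : ∃ u, φ u ≠ 0 := by
    simpa [LinearMap.ext_iff] using hφ
  ext x
  by_cases hx : φ x = 0
  · have hxu : f (x + u) = g (x + u) := h (x + u) (by simpa [hx] using hu)
    simpa [h u hu] using hxu
  · exact h x hx

theorem charpoly_isRoot_of_comp_eq_smul {K E : Type*} [Field K] [AddCommGroup E] [Module K E]
    [FiniteDimensional K E] {T : Module.End K E} {φ : Module.Dual K E} {μ : K} (hφ : φ ≠ 0)
    (h : φ ∘ₗ T = μ • φ) : T.charpoly.IsRoot μ := by
  have hker : φ ∈ LinearMap.ker (algebraMap K (Module.End K E) μ - T).dualMap := by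
    ext x
    simpa [sub_eq_zero] using (LinearMap.congr_fun h x).symm
  rw [IsRoot, LinearMap.eval_charpoly, ← LinearMap.det_dualMap,
    LinearMap.det_eq_zero_iff_ker_ne_bot]
  exact (Submodule.ne_bot_iff _).mpr ⟨φ, hker, hφ⟩

theorem charpoly_eq_X_pow_mul_charpoly_mapQ {K E : Type*} [Field K] [AddCommGroup E] [Module K E]
    [FiniteDimensional K E] {T : Module.End K E} {S : Submodule K E} (hS : S ≤ LinearMap.ker T)
    (hST : S ≤ S.comap T) :
    T.charpoly = X ^ Module.finrank K S * (S.mapQ S T hST).charpoly := by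
  let bS := Module.finBasis K S
  let bQ := Module.finBasis K (E ⧸ S)
  let b := bS.sumQuot bQ
  have hblock : LinearMap.toMatrix b b T = Matrix.fromBlocks 0
      (Matrix.of fun i j => b.repr (T (b (Sum.inr j))) (Sum.inl i)) 0
      (LinearMap.toMatrix bQ bQ (S.mapQ S T hST)) := by
    have hT (i) : T (bS i) = 0 := hS (bS i).2
    ext (i | i) (j | j)
    · simp [b, LinearMap.toMatrix_apply, hT]
    · simp [LinearMap.toMatrix_apply]
    · simp [b, LinearMap.toMatrix_apply, hT]
    · simp [b, LinearMap.toMatrix_apply, ← Module.Basis.sumQuot_inr bS bQ j,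
        -Module.Basis.sumQuot_inr]
  rw [← LinearMap.charpoly_toMatrix T b, hblock, Matrix.charpoly_fromBlocks_zero₂₁,
    Matrix.charpoly_zero, LinearMap.charpoly_toMatrix, Fintype.card_fin]

theorem eval_eq_zero_of_charpoly_map_eq_X_pow_mul {K L E : Type*} [Field K] [Field L]
    [Algebra K L] [AddCommGroup E] [Module K E] [FiniteDimensional K E] {T : Module.End K E}
    {φ : Module.Dual K E} {μ : K} {S : Submodule K E} {q : L[X]} (hST : S ≤ LinearMap.ker T)
    (hSφ : S ≤ LinearMap.ker φ) (hφ : φ ≠ 0) (h : φ ∘ₗ T = μ • φ)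
    (hq : T.charpoly.map (algebraMap K L) = X ^ Module.finrank K S * q) :
    q.eval (algebraMap K L μ) = 0 := by
  have hinv : S ≤ S.comap T := fun x hx => by simp [LinearMap.mem_ker.mp (hST hx)]
  have hquot : q = (S.mapQ S T hinv).charpoly.map (algebraMap K L) := by
    rw [charpoly_eq_X_pow_mul_charpoly_mapQ hST hinv, Polynomial.map_mul, Polynomial.map_pow,
      map_X] at hq
    exact (mul_left_cancel₀ (pow_ne_zero _ X_ne_zero) hq).symm
  have hdesc : S.liftQ φ hSφ ≠ 0 := fun h0 => hφ <| by
    rw [← S.liftQ_mkQ φ hSφ, h0, LinearMap.zero_comp]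
  have heig : S.liftQ φ hSφ ∘ₗ S.mapQ S T hinv = μ • S.liftQ φ hSφ :=
    Submodule.linearMap_qext S <| by ext x; simpa using LinearMap.congr_fun h x
  rw [hquot, eval_map_algebraMap, aeval_algebraMap_apply, coe_aeval_eq_eval,
    (charpoly_isRoot_of_comp_eq_smul hdesc heig).eq_zero, map_zero]

theorem algebraMap_trace_eq_sum_roots_of_splits {K L E : Type*} [Field K] [Field L] [Algebra K L]
    [AddCommGroup E] [Module K E] [FiniteDimensional K E] {T : Module.End K E}
    (h : (T.charpoly.map (algebraMap K L)).Splits) :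
    algebraMap K L (LinearMap.trace K E T) = (T.charpoly.map (algebraMap K L)).roots.sum := by
  rw [← LinearMap.charpoly_baseChange] at h ⊢
  rw [← LinearMap.trace_baseChange]
  exact Module.End.trace_eq_sum_roots_charpoly_of_splits h

theorem algebraMap_trace_eq_add_of_charpoly_map_eq {K L E : Type*} [Field K] [Field L]
    [Algebra K L] [AddCommGroup E] [Module K E] [FiniteDimensional K E] {T : Module.End K E}
    {k : ℕ} {a b : L}
    (h : T.charpoly.map (algebraMap K L) = X ^ k * ((X - C a) * (X - C b))) :
    algebraMap K L (LinearMap.trace K E T) = a + b := by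
  have hlin : (X - C a) * (X - C b) ≠ 0 :=
    mul_ne_zero (X_sub_C_ne_zero a) (X_sub_C_ne_zero b)
  have hsplits : (X ^ k * ((X - C a) * (X - C b))).Splits :=
    (Splits.X_pow k).mul ((Splits.X_sub_C a).mul (Splits.X_sub_C b))
  rw [algebraMap_trace_eq_sum_roots_of_splits (h ▸ hsplits), h,
    roots_mul (mul_ne_zero (pow_ne_zero _ X_ne_zero) hlin), roots_mul hlin]
  simp [Multiset.sum_nsmul]

theorem finrank_ker_funLeft {K m n : Type*} [Field K] [Fintype m] [Fintype n] {e : m → n}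
    (he : Function.Injective e) :
    Module.finrank K (LinearMap.ker (LinearMap.funLeft K K e)) + Fintype.card m =
      Fintype.card n := by
  have h := (LinearMap.funLeft K K e).finrank_range_add_finrank_ker
  rwa [LinearMap.range_eq_top.mpr (LinearMap.funLeft_surjective_of_injective K K e he),
    finrank_top, Module.finrank_pi, Module.finrank_pi, add_comm] at h

end LinearAlgebra

section Topology

variable {X Y : Type*} [TopologicalSpace X] {f : X → ℝ} {p : X}

theorem nhdsWithin_diff_zeros_eq {Ω : Set X} (hΩ : Ω ∈ 𝓝 p) :
    𝓝[Ω \ {x | x ∈ Ω ∧ f x = 0}] p = 𝓝[{x | f x ≠ 0}] p := by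
  have hset : Ω \ {x | x ∈ Ω ∧ f x = 0} = Ω ∩ {x | f x ≠ 0} := by
    ext x
    simp
  rw [hset, nhdsWithin_inter_of_mem (mem_nhdsWithin_of_mem_nhds hΩ)]

theorem eventuallyEq_nhds_of_eventuallyEq_nhdsWithin_ne_zero {V W : X → Y}
    (hf : ∀ᶠ x in 𝓝 p, ContinuousAt f x) (h : V =ᶠ[𝓝[{x | f x ≠ 0}] p] W) :
    ∀ᶠ x in 𝓝[{x | f x ≠ 0}] p, V =ᶠ[𝓝 x] W := by
  filter_upwards [eventually_eventually_nhdsWithin.mpr h, hf.filter_mono nhdsWithin_le_nhds,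
    self_mem_nhdsWithin] with x hVW hx hfx
  rwa [nhdsWithin_eq_nhds.mpr (hx.eventually_ne hfx)] at hVW

end Topology

section NormedSpace

variable {E F : Type*} [NormedAddCommGroup E] [NormedSpace ℝ E] [NormedAddCommGroup F]
  [NormedSpace ℝ F]

theorem tendsto_add_smul_nhdsNE_zero (p e : E) :
    Tendsto (fun t : ℝ => p + t • e) (𝓝[≠] 0) (𝓝 p) := by
  have h : Continuous fun t : ℝ => p + t • e := by fun_prop
  exact (h.tendsto' 0 p (by simp)).mono_left nhdsWithin_le_nhds

theorem tendsto_inv_smul_of_eq_zero {g : E → F} {p : E} (hg : DifferentiableAt ℝ g p)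
    (hgp : g p = 0) (e : E) :
    Tendsto (fun t : ℝ => t⁻¹ • g (p + t • e)) (𝓝[≠] 0) (𝓝 (fderiv ℝ g p e)) := by
  simpa [hgp] using (hg.hasFDerivAt.hasLineDerivAt e).tendsto_slope_zero

theorem le_ker_fderiv_of_eventually_eq_zero {g : E → F} {p : E} {S : Submodule ℝ E}
    (hg : DifferentiableAt ℝ g p) (hgS : ∀ᶠ x in 𝓝 p, x - p ∈ S → g x = 0) :
    S ≤ LinearMap.ker (fderiv ℝ g p : E →ₗ[ℝ] F) := by
  intro e he
  have hgp : g p = 0 := hgS.self_of_nhds (by simp)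
  refine tendsto_nhds_unique (tendsto_inv_smul_of_eq_zero hg hgp e)
    (tendsto_const_nhds.congr' ?_)
  filter_upwards [(tendsto_add_smul_nhdsNE_zero p e).eventually hgS] with t ht
  rw [ht (by simpa using S.smul_mem t he), smul_zero]

theorem eventually_add_smul_ne_zero {f : E → F} {p e : E} (hf : DifferentiableAt ℝ f p)
    (hfp : f p = 0) (he : fderiv ℝ f p e ≠ 0) : ∀ᶠ t : ℝ in 𝓝[≠] 0, f (p + t • e) ≠ 0 := by
  filter_upwards [(tendsto_inv_smul_of_eq_zero hf hfp e).eventually_ne he] with t ht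
  exact (smul_ne_zero_iff.mp ht).2

theorem tendsto_fderiv_apply_div {f : E → ℝ} {V : E → E} {p e : E} (hf : ContDiffAt ℝ 1 f p)
    (hV : DifferentiableAt ℝ V p) (hfp : f p = 0) (hVp : V p = 0) (he : fderiv ℝ f p e ≠ 0) :
    Tendsto (fun t : ℝ => fderiv ℝ f (p + t • e) (V (p + t • e)) / f (p + t • e)) (𝓝[≠] 0)
      (𝓝 (fderiv ℝ f p (fderiv ℝ V p e) / fderiv ℝ f p e)) := by
  have hdf : Tendsto (fun t : ℝ => fderiv ℝ f (p + t • e)) (𝓝[≠] 0) (𝓝 (fderiv ℝ f p)) :=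
    (hf.continuousAt_fderiv one_ne_zero).tendsto.comp (tendsto_add_smul_nhdsNE_zero p e)
  have hnum : Tendsto (fun t : ℝ => fderiv ℝ f (p + t • e) (t⁻¹ • V (p + t • e))) (𝓝[≠] 0)
      (𝓝 (fderiv ℝ f p (fderiv ℝ V p e))) :=
    (isBoundedBilinearMap_apply.continuous.tendsto (fderiv ℝ f p, fderiv ℝ V p e)).comp
      (hdf.prodMk_nhds (tendsto_inv_smul_of_eq_zero hV hVp e))
  have hden := tendsto_inv_smul_of_eq_zero (hf.differentiableAt one_ne_zero) hfp e
  refine (hnum.div hden he).congr' ?_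
  filter_upwards [self_mem_nhdsWithin] with t ht
  rw [Pi.div_apply, map_smul, smul_eq_mul, smul_eq_mul, mul_div_mul_left _ _ (inv_ne_zero ht)]

end NormedSpace

section Divergence

variable {n : ℕ} {f : (Fin n → ℝ) → ℝ} {V W : (Fin n → ℝ) → (Fin n → ℝ)} {p : Fin n → ℝ} {r : ℝ}

theorem fderiv_apply_eq_sum_mul_pderiv' (g : (Fin n → ℝ) → ℝ) (x u : Fin n → ℝ) :
    fderiv ℝ g x u = ∑ i, u i * pderiv' g i x := by
  conv_lhs => rw [pi_eq_sum_univ' u, map_sum]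
  simp [pderiv']

theorem fderiv_ne_zero_of_grad'_ne_zero (h : grad' f p ≠ 0) :
    (fderiv ℝ f p : (Fin n → ℝ) →ₗ[ℝ] ℝ) ≠ 0 := fun h0 =>
  h <| funext fun i => LinearMap.congr_fun h0 (Pi.single i 1)

theorem of_pderiv'_eq_toMatrix'_fderiv (hV : DifferentiableAt ℝ V p) :
    Matrix.of (fun i j => pderiv' (fun y => V y i) j p) =
      LinearMap.toMatrix' (fderiv ℝ V p : (Fin n → ℝ) →ₗ[ℝ] (Fin n → ℝ)) := by
  ext i j
  simp [pderiv', fderiv_apply hV, LinearMap.toMatrix'_apply]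

theorem diverg_eq_trace_fderiv (hV : DifferentiableAt ℝ V p) :
    diverg V p = LinearMap.trace ℝ _ (fderiv ℝ V p : (Fin n → ℝ) →ₗ[ℝ] (Fin n → ℝ)) := by
  rw [← Matrix.toLin'_toMatrix' (fderiv ℝ V p : (Fin n → ℝ) →ₗ[ℝ] (Fin n → ℝ)),
    Matrix.trace_toLin'_eq, ← of_pderiv'_eq_toMatrix'_fderiv hV]
  rfl

theorem charpoly_map_of_pderiv' {L : Type*} [CommRing L] [Algebra ℝ L]
    (hV : DifferentiableAt ℝ V p) :
    ((Matrix.of fun i j => pderiv' (fun y => V y i) j p).map (algebraMap ℝ L)).charpoly =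
      (fderiv ℝ V p : Module.End ℝ (Fin n → ℝ)).charpoly.map (algebraMap ℝ L) := by
  rw [of_pderiv'_eq_toMatrix'_fderiv hV, Matrix.charpoly_map, ← LinearMap.toMatrix_eq_toMatrix',
    LinearMap.charpoly_toMatrix]

theorem continuousAt_diverg (hV : ContDiffAt ℝ 1 V p) : ContinuousAt (diverg V) p :=
  tendsto_finsetSum _ fun i _ =>
    ((contDiffAt_pi.mp hV i).continuousAt_fderiv one_ne_zero).clm_apply continuousAt_const

theorem diverg_congr (h : V =ᶠ[𝓝 p] W) : diverg V p = diverg W p :=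
  Finset.sum_congr rfl fun i _ => by
    have hi : fderiv ℝ (fun y => V y i) p = fderiv ℝ (fun y => W y i) p :=
      (h.fun_comp (· i)).fderiv_eq
    rw [pderiv', pderiv', hi]

theorem diverg_smul (hf : DifferentiableAt ℝ f p) (hV : DifferentiableAt ℝ V p) :
    diverg (fun x => f x • V x) p = f p * diverg V p + fderiv ℝ f p (V p) := by
  have hterm (i : Fin n) : pderiv' (fun x => (f x • V x) i) i p =
      f p * pderiv' (fun x => V x i) i p + V p i * pderiv' f i p := by
    simp [pderiv', fderiv_fun_mul hf (differentiableAt_pi.mp hV i)]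
  simp only [diverg, hterm, Finset.sum_add_distrib, ← Finset.mul_sum,
    fderiv_apply_eq_sum_mul_pderiv' f]

theorem hasDerivAt_abs_rpow_neg {t : ℝ} (ht : t ≠ 0) (r : ℝ) :
    HasDerivAt (fun s : ℝ => |s| ^ (-r)) (-r * |t| ^ (-r) / t) t := by
  have hrpow := (hasDerivAt_abs ht).rpow_const (p := -r) (Or.inl (abs_ne_zero.mpr ht))
  convert hrpow using 1
  rw [Real.rpow_sub_one (abs_ne_zero.mpr ht)]
  rcases ht.lt_or_gt with hneg | hpos
  · simp only [abs_of_neg hneg, sign_neg hneg, SignType.coe_neg, SignType.coe_one]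
    field_simp
  · simp only [abs_of_pos hpos, sign_pos hpos, SignType.coe_one]
    field_simp

theorem abs_rpow_mul_diverg_abs_rpow_neg_smul (hf : DifferentiableAt ℝ f p)
    (hV : DifferentiableAt ℝ V p) (hfp : f p ≠ 0) :
    |f p| ^ r * diverg (fun x => |f x| ^ (-r) • V x) p =
      diverg V p - r * (fderiv ℝ f p (V p) / f p) := by
  have hrpow : HasFDerivAt (fun x => |f x| ^ (-r)) ((-r * |f p| ^ (-r) / f p) • fderiv ℝ f p) p :=
    (hasDerivAt_abs_rpow_neg hfp r).comp_hasFDerivAt p hf.hasFDerivAt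
  have hcancel : |f p| ^ r * |f p| ^ (-r) = 1 := by
    rw [← Real.rpow_add (abs_pos.mpr hfp), add_neg_cancel, Real.rpow_zero]
  rw [diverg_smul hrpow.differentiableAt hV, hrpow.fderiv]
  simp only [smul_apply, smul_eq_mul]
  linear_combination (diverg V p - r * (fderiv ℝ f p (V p) / f p)) * hcancel

theorem mul_fderiv_fderiv_eq_diverg_mul_of_ne_zero (hf : ContDiffAt ℝ 1 f p)
    (hV : ContDiffAt ℝ 1 V p) (hfp : f p = 0) (hVp : V p = 0)
    (hW : W =ᶠ[𝓝[{x | f x ≠ 0}] p] fun x => |f x| ^ (-r) • V x)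
    (hdiv : Tendsto (fun x => |f x| ^ r * diverg W x) (𝓝[{x | f x ≠ 0}] p) (𝓝 0))
    {e : Fin n → ℝ} (he : fderiv ℝ f p e ≠ 0) :
    r * fderiv ℝ f p (fderiv ℝ V p e) = diverg V p * fderiv ℝ f p e := by
  have hf' : ∀ᶠ x in 𝓝 p, DifferentiableAt ℝ f x :=
    (hf.eventually (by simp)).mono fun _ hx => hx.differentiableAt one_ne_zero
  have hV' : ∀ᶠ x in 𝓝 p, DifferentiableAt ℝ V x :=
    (hV.eventually (by simp)).mono fun _ hx => hx.differentiableAt one_ne_zero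
  have hformula : ∀ᶠ x in 𝓝[{x | f x ≠ 0}] p,
      |f x| ^ r * diverg W x = diverg V x - r * (fderiv ℝ f x (V x) / f x) := by
    filter_upwards [eventuallyEq_nhds_of_eventuallyEq_nhdsWithin_ne_zero
      (hf'.mono fun _ hx => hx.continuousAt) hW, hf'.filter_mono nhdsWithin_le_nhds,
      hV'.filter_mono nhdsWithin_le_nhds, self_mem_nhdsWithin] with x hWx hfx hVx hx
    rw [diverg_congr hWx, abs_rpow_mul_diverg_abs_rpow_neg_smul hfx hVx hx]
  have hline : Tendsto (fun t : ℝ => p + t • e) (𝓝[≠] 0) (𝓝[{x | f x ≠ 0}] p) :=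
    tendsto_nhdsWithin_iff.mpr ⟨tendsto_add_smul_nhdsNE_zero p e,
      eventually_add_smul_ne_zero hf'.self_of_nhds hfp he⟩
  have hlim := ((continuousAt_diverg hV).tendsto.comp (tendsto_add_smul_nhdsNE_zero p e)).sub
    ((tendsto_fderiv_apply_div hf hV'.self_of_nhds hfp hVp he).const_mul r)
  have heq := tendsto_nhds_unique ((hdiv.congr' hformula).comp hline) hlim
  field_simp at heq
  linarith

theorem smul_fderiv_comp_fderiv_eq_diverg_smul (hf : ContDiffAt ℝ 1 f p)
    (hV : ContDiffAt ℝ 1 V p) (hfp : f p = 0) (hVp : V p = 0)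
    (hdf : (fderiv ℝ f p : (Fin n → ℝ) →ₗ[ℝ] ℝ) ≠ 0)
    (hW : W =ᶠ[𝓝[{x | f x ≠ 0}] p] fun x => |f x| ^ (-r) • V x)
    (hdiv : Tendsto (fun x => |f x| ^ r * diverg W x) (𝓝[{x | f x ≠ 0}] p) (𝓝 0)) :
    r • (fderiv ℝ f p ∘L fderiv ℝ V p : (Fin n → ℝ) →ₗ[ℝ] ℝ) =
      diverg V p • (fderiv ℝ f p : (Fin n → ℝ) →ₗ[ℝ] ℝ) :=
  linearMap_ext_of_apply_ne_zero hdf fun _ he =>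
    mul_fderiv_fderiv_eq_diverg_mul_of_ne_zero hf hV hfp hVp hW hdiv he

end Divergence

section Spectrum

open Polynomial

theorem eq_sub_one_mul_of_sum_div_isRoot {r s : ℝ} {a b : ℂ} (hr0 : r ≠ 0) (hr1 : r ≠ 1)
    (ha : a ≠ 0) (hs : (s : ℂ) = a + b)
    (hroot : ((X - C a) * (X - C b)).eval (algebraMap ℝ ℂ (s / r)) = 0) :
    a.im = 0 ∧ b.im = 0 ∧ b ≠ 0 ∧ a + b ≠ 0 ∧ (b = ((r : ℂ) - 1) * a ∨ a = ((r : ℂ) - 1) * b) := by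
  have hrC : (r : ℂ) ≠ 0 := mod_cast hr0
  have hrC1 : (r : ℂ) - 1 ≠ 0 := sub_ne_zero.mpr (mod_cast hr1)
  obtain ⟨μ, hμ⟩ : ∃ μ : ℝ, μ = s / r := ⟨_, rfl⟩
  have hsum : a + b = r * μ := by
    rw [← hs, hμ]; push_cast; field_simp
  rw [← hμ] at hroot
  have hcases : a = μ ∨ b = μ := by
    simpa [sub_eq_zero, eq_comm] using hroot
  rcases hcases with rfl | rfl
  · have hb : b = ((r : ℂ) - 1) * μ := by linear_combination hsum
    refine ⟨Complex.ofReal_im μ, ?_, ?_, ?_, Or.inl hb⟩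
    · rw [hb]; simp
    · rw [hb]; exact mul_ne_zero hrC1 ha
    · rw [hsum]; exact mul_ne_zero hrC ha
  · have hab : a = ((r : ℂ) - 1) * μ := by linear_combination hsum
    have hμ0 : (μ : ℂ) ≠ 0 := right_ne_zero_of_mul (hab ▸ ha)
    refine ⟨?_, Complex.ofReal_im μ, hμ0, ?_, Or.inr hab⟩
    · rw [hab]; simp
    · rw [hsum]; exact mul_ne_zero hrC hμ0

theorem stmt13_general {n : ℕ} {Ω Γ : Set (Fin n → ℝ)} {p : Fin n → ℝ}
    {f : (Fin n → ℝ) → ℝ} {V W : (Fin n → ℝ) → (Fin n → ℝ)} {S : Submodule ℝ (Fin n → ℝ)} {r : ℝ}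
    {J : Matrix (Fin n) (Fin n) ℝ} {lam₁ lam₂ : ℂ} (hΩ : Ω ∈ 𝓝 p)
    (hΓ : Γ = {x | x ∈ Ω ∧ f x = 0}) (hf : ContDiffAt ℝ 1 f p) (hreg : grad' f p ≠ 0)
    (hV : ContDiffAt ℝ 1 V p) (hSΓ : ∀ᶠ x in 𝓝 p, x - p ∈ S → x ∈ Γ)
    (hSV : ∀ᶠ x in 𝓝 p, x - p ∈ S → V x = 0) (hr0 : r ≠ 0) (hr1 : r ≠ 1)
    (hW : ∀ x ∈ Ω \ Γ, W x = |f x| ^ (-r) • V x)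
    (hdiv : Tendsto (fun x => |f x| ^ r * diverg W x) (𝓝[Ω \ Γ] p) (𝓝 0))
    (hJ : J = Matrix.of fun i j => pderiv' (fun y => V y i) j p) (hlam₁ : lam₁ ≠ 0)
    (hchar : (J.map (algebraMap ℝ ℂ)).charpoly =
      X ^ Module.finrank ℝ S * (X - C lam₁) * (X - C lam₂)) :
    lam₁.im = 0 ∧ lam₂.im = 0 ∧ lam₂ ≠ 0 ∧ lam₁ + lam₂ ≠ 0 ∧
      (lam₂ = ((r : ℂ) - 1) * lam₁ ∨ lam₁ = ((r : ℂ) - 1) * lam₂) := by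
  have hf' := hf.differentiableAt one_ne_zero
  have hV' := hV.differentiableAt one_ne_zero
  have hdf := fderiv_ne_zero_of_grad'_ne_zero hreg
  have hW' : W =ᶠ[𝓝[Ω \ Γ] p] fun x => |f x| ^ (-r) • V x := eventually_mem_nhdsWithin.mono hW
  subst hΓ
  rw [nhdsWithin_diff_zeros_eq hΩ] at hW' hdiv
  rw [hJ, charpoly_map_of_pderiv' hV', mul_assoc] at hchar
  have hSf : ∀ᶠ x in 𝓝 p, x - p ∈ S → f x = 0 := hSΓ.mono fun x hx hxS => (hx hxS).2
  have hleft := smul_fderiv_comp_fderiv_eq_diverg_smul hf hV (hSf.self_of_nhds (by simp))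
    (hSV.self_of_nhds (by simp)) hdf hW' hdiv
  have hroot := eval_eq_zero_of_charpoly_map_eq_X_pow_mul (μ := diverg V p / r)
    (le_ker_fderiv_of_eventually_eq_zero hV' hSV) (le_ker_fderiv_of_eventually_eq_zero hf' hSf)
    hdf (by rw [div_eq_inv_mul, mul_smul, ← hleft, inv_smul_smul₀ hr0]; rfl) hchar
  have htrace : (diverg V p : ℂ) = lam₁ + lam₂ := by
    rw [diverg_eq_trace_fderiv hV']
    exact algebraMap_trace_eq_add_of_charpoly_map_eq hchar
  exact eq_sub_one_mul_of_sum_div_isRoot hr0 hr1 hlam₁ htrace hroot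

end Spectrum

section CoordinatePlane

/-- The subspace `ξ = η = 0` of `ℝ^{2+l}`, i.e. the paper's `W^c` as a linear subspace,
encoded as the kernel of the projection to the first two coordinates. -/
noncomputable def centerSubspace (l : ℕ) : Submodule ℝ (Fin (l + 2) → ℝ) :=
  LinearMap.ker (LinearMap.funLeft ℝ ℝ ![0, 1])

theorem mem_centerSubspace {l : ℕ} {x : Fin (l + 2) → ℝ} :
    x ∈ centerSubspace l ↔ x 0 = 0 ∧ x 1 = 0 := by
  simp [centerSubspace, funext_iff, LinearMap.funLeft_apply]

theorem eventually_sub_mem_centerSubspace_imp {l : ℕ} {U : Set (Fin (l + 2) → ℝ)}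
    {P : (Fin (l + 2) → ℝ) → Prop} (hU : U ∈ 𝓝 0) (h : ∀ x ∈ U, x 0 = 0 ∧ x 1 = 0 → P x) :
    ∀ᶠ x in 𝓝 0, x - 0 ∈ centerSubspace l → P x := by
  filter_upwards [hU] with x hx hxS
  exact h x hx (mem_centerSubspace.mp (sub_zero x ▸ hxS))

theorem finrank_centerSubspace (l : ℕ) : Module.finrank ℝ (centerSubspace l) = l := by
  have h : Function.Injective ![(0 : Fin (l + 2)), 1] := by
    simp [Function.Injective, Fin.forall_fin_two]
  have hrank := finrank_ker_funLeft (K := ℝ) h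
  rw [Fintype.card_fin, Fintype.card_fin] at hrank
  exact Nat.add_right_cancel hrank

variable {l : ℕ} {V : (Fin (l + 2) → ℝ) → (Fin (l + 2) → ℝ)} {v w : (Fin (l + 2) → ℝ) → ℝ}
  {α β : Fin l → (Fin (l + 2) → ℝ) → ℝ}

theorem contDiffAt_of_components {k : WithTop ℕ∞} {p : Fin (l + 2) → ℝ}
    (hv : ContDiffAt ℝ k v p) (hw : ContDiffAt ℝ k w p) (hα : ∀ i, ContDiffAt ℝ k (α i) p)
    (hβ : ∀ i, ContDiffAt ℝ k (β i) p) (hV0 : ∀ x, V x 0 = v x) (hV1 : ∀ x, V x 1 = w x)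
    (hVi : ∀ x, ∀ i : Fin l, V x i.succ.succ = α i x * v x + β i x * w x) :
    ContDiffAt ℝ k V p := by
  refine contDiffAt_pi.mpr (Fin.forall_fin_succ.mpr ⟨?_, Fin.forall_fin_succ.mpr ⟨?_, fun i => ?_⟩⟩)
  · simpa only [hV0] using hv
  · simpa only [Fin.succ_zero_eq_one, hV1] using hw
  · simpa only [hVi] using ((hα i).mul hv).add ((hβ i).mul hw)

theorem eq_zero_of_components {x : Fin (l + 2) → ℝ} (hvw : v x = 0 ∧ w x = 0)
    (hV0 : V x 0 = v x) (hV1 : V x 1 = w x)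
    (hVi : ∀ i : Fin l, V x i.succ.succ = α i x * v x + β i x * w x) : V x = 0 :=
  funext <| Fin.forall_fin_succ.mpr ⟨by simp [hV0, hvw],
    Fin.forall_fin_succ.mpr ⟨by simp [hV1, hvw], fun i => by simp [hVi, hvw]⟩⟩

end CoordinatePlane

/-- Assume Conditions (A) and (B), `r ∉ {0,1}`, `0 ∈ Γ`, the singular set
`W^c = {ξ = η = 0}` of `V` is contained in `Γ` near `0`, and the complex eigenvalues of
the Jacobian of `V` at `0` are `λ₁, λ₂` together with `0` of multiplicity `l`, where `λ₁`
is real and nonzero. Then `λ₂` is real and nonzero, `λ₁ + λ₂ ≠ 0`, and either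
`λ₂ = (r−1)·λ₁` or `λ₁ = (r−1)·λ₂`. -/
theorem stmt13 (l : ℕ) (Ω Γ : Set (Fin (l + 2) → ℝ)) (hΩ : IsOpen Ω)
    (h0Ω : (0 : Fin (l + 2) → ℝ) ∈ Ω)
    (f : (Fin (l + 2) → ℝ) → ℝ) (hf : ContDiffOn ℝ (⊤ : ℕ∞) f Ω)
    (hΓ : Γ = {x | x ∈ Ω ∧ f x = 0}) (hΓne : Γ.Nonempty)
    (hreg : ∀ x ∈ Γ, grad' f x ≠ 0)
    -- V has the form ξ̇ = v, η̇ = w, ζ̇ᵢ = αᵢ v + βᵢ w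
    (V : (Fin (l + 2) → ℝ) → (Fin (l + 2) → ℝ))
    (v w : (Fin (l + 2) → ℝ) → ℝ) (α β : Fin l → (Fin (l + 2) → ℝ) → ℝ)
    (hvs : ContDiffOn ℝ (⊤ : ℕ∞) v Ω) (hws : ContDiffOn ℝ (⊤ : ℕ∞) w Ω)
    (hαs : ∀ i, ContDiffOn ℝ (⊤ : ℕ∞) (α i) Ω) (hβs : ∀ i, ContDiffOn ℝ (⊤ : ℕ∞) (β i) Ω)
    (hV0 : ∀ x, V x 0 = v x) (hV1 : ∀ x, V x 1 = w x)
    (hVi : ∀ x, ∀ i : Fin l, V x i.succ.succ = α i x * v x + β i x * w x)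
    -- near 0, v and w vanish exactly on W^c = {ξ = η = 0}
    (U₀ : Set (Fin (l + 2) → ℝ)) (hU₀ : IsOpen U₀) (h0U₀ : (0 : Fin (l + 2) → ℝ) ∈ U₀)
    (hU₀Ω : U₀ ⊆ Ω)
    (hWc : ∀ x ∈ U₀, (v x = 0 ∧ w x = 0) ↔ (x 0 = 0 ∧ x 1 = 0))
    -- W = |f|^{−r} V and Conditions (A), (B)
    (r : ℝ) (hr0 : r ≠ 0) (hr1 : r ≠ 1)
    (W : (Fin (l + 2) → ℝ) → (Fin (l + 2) → ℝ))
    (hW : ∀ x ∈ Ω \ Γ, W x = |f x| ^ (-r) • V x)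
    (hA : CondA Ω Γ f r W) (hB : CondB Ω Γ f r V W)
    -- 0 ∈ Γ and W^c ⊆ Γ in a neighborhood of 0
    (h0Γ : (0 : Fin (l + 2) → ℝ) ∈ Γ)
    (hWcΓ : ∀ x ∈ U₀, (x 0 = 0 ∧ x 1 = 0) → x ∈ Γ)
    -- the complex eigenvalues of the Jacobian of V at 0 are λ₁, λ₂ and 0 (multiplicity l)
    (J : Matrix (Fin (l + 2)) (Fin (l + 2)) ℝ)
    (hJ : J = Matrix.of fun i j => pderiv' (fun y => V y i) j 0)
    (lam₁ : ℝ) (lam₂ : ℂ) (hlam₁ : lam₁ ≠ 0)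
    (hchar : (J.map (fun t => (t : ℂ))).charpoly =
      Polynomial.X ^ l * (Polynomial.X - Polynomial.C (lam₁ : ℂ)) *
        (Polynomial.X - Polynomial.C lam₂)) :
    lam₂.im = 0 ∧ lam₂ ≠ 0 ∧ (lam₁ : ℂ) + lam₂ ≠ 0 ∧
      (lam₂ = ((r : ℂ) - 1) * (lam₁ : ℂ) ∨ (lam₁ : ℂ) = ((r : ℂ) - 1) * lam₂) := by
  have hΩ0 : Ω ∈ 𝓝 0 := hΩ.mem_nhds h0Ω
  have hle : (1 : WithTop ℕ∞) ≤ (⊤ : ℕ∞) := by simp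
  have hV : ContDiffAt ℝ 1 V 0 := .of_le (contDiffAt_of_components (hvs.contDiffAt hΩ0)
    (hws.contDiffAt hΩ0) (fun i => (hαs i).contDiffAt hΩ0) (fun i => (hβs i).contDiffAt hΩ0)
    hV0 hV1 hVi) hle
  have hWcV : ∀ᶠ x in 𝓝 0, x - 0 ∈ centerSubspace l → V x = 0 :=
    eventually_sub_mem_centerSubspace_imp (hU₀.mem_nhds h0U₀) fun x hx hxc =>
      eq_zero_of_components ((hWc x hx).mpr hxc) (hV0 x) (hV1 x) (hVi x)
  exact (stmt13_general hΩ0 hΓ ((hf.contDiffAt hΩ0).of_le hle) (hreg 0 h0Γ) hV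
    (eventually_sub_mem_centerSubspace_imp (hU₀.mem_nhds h0U₀) hWcΓ) hWcV hr0 hr1 hW
    (hB 0 h0Γ (hWcV.self_of_nhds (by simp))).1 hJ (Complex.ofReal_ne_zero.mpr hlam₁)
    (by rw [finrank_centerSubspace]; exact hchar)).2
end

section
/- Let z ∈ U be a singular point of W, i.e., W(z) = 0. Then the Jacobian matrix DW(z) of W at z has trace zero and determinant zero; consequently the multiset of complex eigenvalues of DW(z) is {λ, −λ, 0} for some λ ∈ ℂ, i.e., the spectrum of the linearization of W at z has the resonance λ₁ + λ₂ = 0. -/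
/-!
The field `W` is divergence-free: its third component `G = L_x − L_tp − p·L_xp` satisfies
`G_p = −(∂_t + p·∂_x) L_pp` because the terms `L_xp` cancel, while the first two components
contribute `(∂_t + p·∂_x) L_pp`. So `DW` has trace zero everywhere. Where `L_pp = 0`, the product
rule makes the second row of `DW` equal to `p` times the first, so the determinant vanishes too.
A `3 × 3` matrix with trace and determinant zero has characteristic polynomial `X³ + c·X`, which
factors as `X (X − λ) (X + λ)` with `λ² = −c`.
-/

open Filter Topology

/-- Partial derivative with respect to `t` of a function on the `(t,x,p)`-space. -/
noncomputable def dT (g : ℝ × ℝ × ℝ → ℝ) (z : ℝ × ℝ × ℝ) : ℝ :=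
  fderiv ℝ g z ((1 : ℝ), (0 : ℝ), (0 : ℝ))

/-- Partial derivative with respect to `x` of a function on the `(t,x,p)`-space. -/
noncomputable def dX (g : ℝ × ℝ × ℝ → ℝ) (z : ℝ × ℝ × ℝ) : ℝ :=
  fderiv ℝ g z ((0 : ℝ), (1 : ℝ), (0 : ℝ))

/-- Partial derivative with respect to `p` of a function on the `(t,x,p)`-space. -/
noncomputable def dP (g : ℝ × ℝ × ℝ → ℝ) (z : ℝ × ℝ × ℝ) : ℝ :=
  fderiv ℝ g z ((0 : ℝ), (0 : ℝ), (1 : ℝ))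

section Calculus

variable {𝕜 E F : Type*} [NontriviallyNormedField 𝕜] [NormedAddCommGroup E] [NormedSpace 𝕜 E]
  [NormedAddCommGroup F] [NormedSpace 𝕜 F] {z : E}

lemma contDiffAt_fderiv_apply_const {g : E → F} {m n : WithTop ℕ∞} (hg : ContDiffAt 𝕜 n g z)
    (hmn : m + 1 ≤ n) (v : E) : ContDiffAt 𝕜 m (fun y => fderiv 𝕜 g y v) z :=
  (hg.fderiv_right hmn).clm_apply contDiffAt_const

lemma differentiableAt_fderiv_apply_const {g : E → F} {n : WithTop ℕ∞}
    (hg : ContDiffAt 𝕜 n g z) (hn : 2 ≤ n) (v : E) :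
    DifferentiableAt 𝕜 (fun y => fderiv 𝕜 g y v) z :=
  (contDiffAt_fderiv_apply_const (m := 1) hg hn v).differentiableAt one_ne_zero

lemma fderiv_fderiv_apply_comm {g : E → F} {n : WithTop ℕ∞} (hg : ContDiffAt 𝕜 n g z)
    (hn : minSmoothness 𝕜 2 ≤ n) (v w : E) :
    fderiv 𝕜 (fun y => fderiv 𝕜 g y v) z w = fderiv 𝕜 (fun y => fderiv 𝕜 g y w) z v := by
  have hg' : DifferentiableAt 𝕜 (fderiv 𝕜 g) z :=
    (hg.fderiv_right (m := 1) (le_minSmoothness.trans hn)).differentiableAt one_ne_zero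
  rw [fderiv_clm_apply hg' (differentiableAt_const v),
    fderiv_clm_apply hg' (differentiableAt_const w)]
  simpa using (hg.isSymmSndFDerivAt hn).eq w v

lemma fderiv_smul_of_eq_zero {c : E → 𝕜} {f : E → F} (hc : DifferentiableAt 𝕜 c z)
    (hf : DifferentiableAt 𝕜 f z) (hfz : f z = 0) :
    fderiv 𝕜 (fun y => c y • f y) z = c z • fderiv 𝕜 f z := by
  rw [fderiv_fun_smul hc hf, hfz, ContinuousLinearMap.smulRight_zero, add_zero]

lemma hasFDerivAt_snd_snd {G : Type*} [NormedAddCommGroup G] [NormedSpace 𝕜 G] (w : E × F × G) :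
    HasFDerivAt (fun y : E × F × G => y.2.2)
      ((ContinuousLinearMap.snd 𝕜 F G).comp (ContinuousLinearMap.snd 𝕜 E (F × G))) w :=
  hasFDerivAt_snd.comp w hasFDerivAt_snd

end Calculus

section LinearAlgebra

lemma det_eq_zero_of_row_eq_smul_row {n R : Type*} [Fintype n] [DecidableEq n] [CommRing R]
    {M : Matrix n n R} {i j : n} (hij : i ≠ j) {c : R} (h : M i = c • M j) : M.det = 0 := by
  rw [← M.updateRow_eq_self i, h, Matrix.det_updateRow_smul,
    Matrix.det_updateRow_eq_zero hij.symm, mul_zero]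

open Polynomial in
lemma charpoly_fin_three {R : Type*} [CommRing R] (M : Matrix (Fin 3) (Fin 3) R) :
    M.charpoly = X ^ 3 - C M.trace * X ^ 2 + C M.adjugate.trace * X - C M.det := by
  rw [Matrix.charpoly, Matrix.det_fin_three, Matrix.det_fin_three, Matrix.adjugate_fin_three,
    Matrix.trace_fin_three, Matrix.trace_fin_three]
  simp only [Fin.isValue, Matrix.charmatrix_apply_eq, ne_eq, Fin.reduceEq, not_false_eq_true,
    Matrix.charmatrix_apply_ne, mul_neg, neg_mul, neg_neg, zero_ne_one, one_ne_zero, map_add,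
    Matrix.of_apply, Matrix.cons_val', Matrix.cons_val_zero, Matrix.cons_val_fin_one,
    Matrix.cons_val_one, Matrix.cons_val, map_sub, map_mul]
  ring

open Polynomial in
lemma exists_charpoly_eq_of_trace_eq_zero_of_det_eq_zero {K : Type*} [Field K] [IsAlgClosed K]
    {M : Matrix (Fin 3) (Fin 3) K} (htrace : M.trace = 0) (hdet : M.det = 0) :
    ∃ r : K, M.charpoly = X * (X - C r) * (X + C r) := by
  obtain ⟨r, hr⟩ := IsAlgClosed.exists_eq_mul_self (-M.adjugate.trace)
  have hadj : C M.adjugate.trace = -(C r * C r) := by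
    rw [← C_mul, ← hr, C_neg, neg_neg]
  refine ⟨r, ?_⟩
  rw [charpoly_fin_three, htrace, hdet, hadj, C_0]
  ring

end LinearAlgebra

/-- The Jacobian matrix at `z` of a vector field `W` on the `(t, x, p)`-space. -/
noncomputable def jacobian (W : ℝ × ℝ × ℝ → ℝ × ℝ × ℝ) (z : ℝ × ℝ × ℝ) :
    Matrix (Fin 3) (Fin 3) ℝ :=
  Matrix.of fun i j =>
    fderiv ℝ (fun y => ![(W y).1, (W y).2.1, (W y).2.2] i) z
      (![((1 : ℝ), (0 : ℝ), (0 : ℝ)), ((0 : ℝ), (1 : ℝ), (0 : ℝ)),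
         ((0 : ℝ), (0 : ℝ), (1 : ℝ))] j)

/-- The vector field `(L_pp, p·L_pp, L_x − L_tp − p·L_xp)` associated with the Euler–Lagrange
equation of the Lagrangian `L`, as a total function: where `L` is not twice differentiable, its
components may be junk values of `fderiv`. -/
noncomputable def eulerLagrangeField (L : ℝ × ℝ × ℝ → ℝ) : ℝ × ℝ × ℝ → ℝ × ℝ × ℝ :=
  fun z => (dP (dP L) z, z.2.2 * dP (dP L) z, dX L z - dT (dP L) z - z.2.2 * dX (dP L) z)

section PartialDerivatives

variable {f g : ℝ × ℝ × ℝ → ℝ} {z : ℝ × ℝ × ℝ}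

lemma dP_sub (hf : DifferentiableAt ℝ f z) (hg : DifferentiableAt ℝ g z) :
    dP (fun y => f y - g y) z = dP f z - dP g z := by
  simp only [dP, fderiv_fun_sub hf hg, sub_apply]

lemma dP_snd_snd_mul (hf : DifferentiableAt ℝ f z) :
    dP (fun y => y.2.2 * f y) z = f z + z.2.2 * dP f z := by
  simp [dP, ((hasFDerivAt_snd_snd z).fun_mul hf.hasFDerivAt).fderiv, add_comm]

lemma dX_snd_snd_mul (hf : DifferentiableAt ℝ f z) :
    dX (fun y => y.2.2 * f y) z = z.2.2 * dX f z := by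
  simp [dX, ((hasFDerivAt_snd_snd z).fun_mul hf.hasFDerivAt).fderiv]

end PartialDerivatives

lemma trace_jacobian (W : ℝ × ℝ × ℝ → ℝ × ℝ × ℝ) (z : ℝ × ℝ × ℝ) :
    (jacobian W z).trace =
      dT (fun y => (W y).1) z + dX (fun y => (W y).2.1) z + dP (fun y => (W y).2.2) z :=
  Matrix.trace_fin_three _

lemma det_jacobian_eq_zero_of_snd_eq_mul_fst {W : ℝ × ℝ × ℝ → ℝ × ℝ × ℝ} {g : ℝ × ℝ × ℝ → ℝ}
    {z : ℝ × ℝ × ℝ} (hW : DifferentiableAt ℝ (fun y => (W y).1) z) (hg : DifferentiableAt ℝ g z)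
    (hmul : ∀ y, (W y).2.1 = g y * (W y).1) (hz : (W z).1 = 0) : (jacobian W z).det = 0 := by
  have hfderiv : fderiv ℝ (fun y => (W y).2.1) z = g z • fderiv ℝ (fun y => (W y).1) z := by
    rw [funext hmul]
    exact fderiv_smul_of_eq_zero hg hW hz
  have hrow : jacobian W z 1 = g z • jacobian W z 0 :=
    funext fun _ => DFunLike.congr_fun hfderiv _
  exact det_eq_zero_of_row_eq_smul_row one_ne_zero hrow

section EulerLagrange

variable {L : ℝ × ℝ × ℝ → ℝ} {z : ℝ × ℝ × ℝ}

lemma trace_jacobian_eulerLagrangeField (hL : ContDiffAt ℝ 3 L z) :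
    (jacobian (eulerLagrangeField L) z).trace = 0 := by
  have hLp : ContDiffAt ℝ 2 (dP L) z := contDiffAt_fderiv_apply_const hL (by norm_num) _
  have hLx : DifferentiableAt ℝ (dX L) z :=
    differentiableAt_fderiv_apply_const hL (by norm_num) _
  have hLpp : DifferentiableAt ℝ (dP (dP L)) z := differentiableAt_fderiv_apply_const hLp le_rfl _
  have hLtp : DifferentiableAt ℝ (dT (dP L)) z := differentiableAt_fderiv_apply_const hLp le_rfl _
  have hLxp : DifferentiableAt ℝ (dX (dP L)) z := differentiableAt_fderiv_apply_const hLp le_rfl _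
  have hpLxp : DifferentiableAt ℝ (fun y => y.2.2 * dX (dP L) y) z :=
    differentiableAt_snd.snd.mul hLxp
  have hcomm_xp : dP (dX L) z = dX (dP L) z := fderiv_fderiv_apply_comm hL (by norm_num) _ _
  have hcomm_tpp : dP (dT (dP L)) z = dT (dP (dP L)) z :=
    fderiv_fderiv_apply_comm hLp (by simp) _ _
  have hcomm_xpp : dP (dX (dP L)) z = dX (dP (dP L)) z :=
    fderiv_fderiv_apply_comm hLp (by simp) _ _
  calc (jacobian (eulerLagrangeField L) z).trace
      = dT (dP (dP L)) z + dX (fun y => y.2.2 * dP (dP L) y) z +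
          dP (fun y => dX L y - dT (dP L) y - y.2.2 * dX (dP L) y) z := trace_jacobian _ _
    _ = dT (dP (dP L)) z + z.2.2 * dX (dP (dP L)) z +
          (dP (dX L) z - dP (dT (dP L)) z - (dX (dP L) z + z.2.2 * dP (dX (dP L)) z)) := by
      rw [dX_snd_snd_mul hLpp, dP_sub (hLx.fun_sub hLtp) hpLxp, dP_sub hLx hLtp,
        dP_snd_snd_mul hLxp]
    _ = 0 := by
      rw [hcomm_xp, hcomm_tpp, hcomm_xpp]
      ring

lemma det_jacobian_eulerLagrangeField (hL : ContDiffAt ℝ 3 L z) (hz : dP (dP L) z = 0) :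
    (jacobian (eulerLagrangeField L) z).det = 0 := by
  have hLp : ContDiffAt ℝ 2 (dP L) z := contDiffAt_fderiv_apply_const hL (by norm_num) _
  have hLpp : DifferentiableAt ℝ (dP (dP L)) z := differentiableAt_fderiv_apply_const hLp le_rfl _
  exact det_jacobian_eq_zero_of_snd_eq_mul_fst hLpp differentiableAt_snd.snd (fun _ => rfl) hz

theorem stmt15_general (hL : ContDiffAt ℝ 3 L z) (hz : dP (dP L) z = 0) :
    (jacobian (eulerLagrangeField L) z).trace = 0 ∧
      (jacobian (eulerLagrangeField L) z).det = 0 ∧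
        ∃ lam : ℂ, ((jacobian (eulerLagrangeField L) z).map Complex.ofRealHom).charpoly =
          Polynomial.X * (Polynomial.X - Polynomial.C lam) *
            (Polynomial.X + Polynomial.C lam) := by
  have htrace := trace_jacobian_eulerLagrangeField hL
  have hdet := det_jacobian_eulerLagrangeField hL hz
  refine ⟨htrace, hdet, exists_charpoly_eq_of_trace_eq_zero_of_det_eq_zero ?_ ?_⟩
  · rw [← AddMonoidHom.map_trace, htrace, map_zero]
  · rw [← RingHom.mapMatrix_apply, ← RingHom.map_det, hdet, map_zero]

end EulerLagrange

/-- At any singular point `z` of the Euler–Lagrange field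
`W = (L_pp, p·L_pp, L_x − L_tp − p·L_xp)`, the Jacobian matrix `DW(z)` has trace zero and
determinant zero; consequently its complex eigenvalues form the multiset `{λ, −λ, 0}`
for some `λ ∈ ℂ` (the resonance `λ₁ + λ₂ = 0`). -/
theorem stmt15 (U : Set (ℝ × ℝ × ℝ)) (hU : IsOpen U)
    (L : ℝ × ℝ × ℝ → ℝ) (hL : ContDiffOn ℝ 3 L U)
    (W : ℝ × ℝ × ℝ → ℝ × ℝ × ℝ)
    (hW : W = fun z => (dP (dP L) z, z.2.2 * dP (dP L) z,
      dX L z - dT (dP L) z - z.2.2 * dX (dP L) z))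
    (z : ℝ × ℝ × ℝ) (hz : z ∈ U) (hsing : W z = 0)
    (J : Matrix (Fin 3) (Fin 3) ℝ)
    (hJ : J = Matrix.of fun i j =>
      fderiv ℝ (fun y => ![(W y).1, (W y).2.1, (W y).2.2] i) z
        (![((1 : ℝ), (0 : ℝ), (0 : ℝ)), ((0 : ℝ), (1 : ℝ), (0 : ℝ)),
           ((0 : ℝ), (0 : ℝ), (1 : ℝ))] j)) :
    J.trace = 0 ∧ J.det = 0 ∧
      ∃ lam : ℂ, (J.map (fun t => (t : ℂ))).charpoly =
        Polynomial.X * (Polynomial.X - Polynomial.C lam) *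
          (Polynomial.X + Polynomial.C lam) := by
  subst hW hJ
  exact stmt15_general (hL.contDiffAt (hU.mem_nhds hz)) (congrArg Prod.fst hsing)
end
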